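/- arXiv:1309.2459 — 2 statements merged into one kernel-verified Lean document; each statement's English description precedes it below -/
import Mathlib

section
/- Let Ω ⊆ ℝ² be open and let f : Ω → ℝ be a C^∞ function satisfying the zero mean curvature equation (1 − f_y²) f_xx + 2 f_x f_y f_xy + (1 − f_x²) f_yy = 0 on Ω. If p ∈ Ω is a non-degenerate point of type change, i.e. B(p) = 0 and ∇B(p) ≠ 0 where B := 1 − f_x² − f_y², then f is real analytic on some neighborhood of p. -/
/-!
At `p` one has `f_x² + f_y² = 1`, so after replacing `f` by `-f` if necessary `f_x ≠ -1` near `p`.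
Use `s = B / (1 + f_x)²` and `τ = f_y / (1 + f_x)` as new coordinates. For `n = ∇f` the zero mean
curvature equation at `p` says that the Hessian `H` of `f` satisfies `⟨H n, n⟩ = 0`, while
`H n = -∇B / 2 ≠ 0`. Hence `H` is invertible and `(s, τ)` are indeed coordinates near `p`.

Let `(X, Y)` be the inverse coordinate change and `Z = f (X, Y) + X`. The symmetry of `H` and the
zero mean curvature equation become a linear first order system which expresses `dX` and `dY`
through `dZ`. Its compatibility condition is `4 s Z_ss + 2 Z_s + Z_ττ = 0`, and `X` and `Y` solve
the same equation.

Every `C²` solution `u` of this equation near a point `(0, a)` is analytic there. For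
`s = w² ≥ 0` the function `u (w², τ)` is harmonic in `τ + i w` and even in `w`, so it is the real
part of a power series in `τ - a + i w` with real coefficients. Substituting in this series a real
matrix affine in `(s, τ)` for `τ - a + i √s` yields an analytic function `g` of `(s, τ)` which
equals `u` for `s ≥ 0`. By the identity theorem `g` solves the equation also for `s < 0`. There
`u - g`, as a function of `w = √(-s)` and `τ`, solves the wave equation with vanishing Cauchy data
on `w = 0`, so it vanishes.

Hence `X`, `Y`, `Z` are analytic functions of `(s, τ)`, and so is `f (X, Y) = Z - X`. The coordinate
change is analytic as the inverse of an analytic map with invertible derivative, and `f` is the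
composition of `Z - X` with it.
-/

open Set

/-- Partial derivative in the first (x) direction. -/
noncomputable def pd1 {E : Type*} [NormedAddCommGroup E] [NormedSpace ℝ E]
    (f : ℝ × ℝ → E) (q : ℝ × ℝ) : E := fderiv ℝ f q (1, 0)

/-- Partial derivative in the second (y) direction. -/
noncomputable def pd2 {E : Type*} [NormedAddCommGroup E] [NormedSpace ℝ E]
    (f : ℝ × ℝ → E) (q : ℝ × ℝ) : E := fderiv ℝ f q (0, 1)

/-- B = 1 - f_x^2 - f_y^2. -/
noncomputable def Bfun (f : ℝ × ℝ → ℝ) (q : ℝ × ℝ) : ℝ :=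
  1 - (pd1 f q) ^ 2 - (pd2 f q) ^ 2

/-- The zero mean curvature equation at a point. -/
def ZMCAt (f : ℝ × ℝ → ℝ) (q : ℝ × ℝ) : Prop :=
  (1 - (pd2 f q) ^ 2) * pd1 (pd1 f) q
    + 2 * pd1 f q * pd2 f q * pd2 (pd1 f) q
    + (1 - (pd1 f q) ^ 2) * pd2 (pd2 f) q = 0

open Filter Topology

/-! ### Partial derivatives -/

section PartialDerivatives

variable {E : Type*} [NormedAddCommGroup E] [NormedSpace ℝ E] {u v : ℝ × ℝ → E} {q : ℝ × ℝ}

lemma fderiv_fderiv_apply {F : Type*} [NormedAddCommGroup F] [NormedSpace ℝ F] {u : F → E} {x : F}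
    (hu : ContDiffAt ℝ 2 u x) (v w : F) :
    fderiv ℝ (fun y => fderiv ℝ u y v) x w = fderiv ℝ (fderiv ℝ u) x w v := by
  have hd : DifferentiableAt ℝ (fderiv ℝ u) x :=
    (hu.fderiv_right (m := 1) le_rfl).differentiableAt one_ne_zero
  rw [fderiv_clm_apply hd (differentiableAt_const v)]
  simp

lemma pd1_pd2_comm (hu : ContDiffAt ℝ 2 u q) : pd1 (pd2 u) q = pd2 (pd1 u) q := by
  calc pd1 (pd2 u) q = fderiv ℝ (fderiv ℝ u) q (1, 0) (0, 1) := fderiv_fderiv_apply hu _ _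
    _ = fderiv ℝ (fderiv ℝ u) q (0, 1) (1, 0) := hu.isSymmSndFDerivAt (by simp) _ _
    _ = pd2 (pd1 u) q := (fderiv_fderiv_apply hu _ _).symm

lemma contDiffAt_pd1 {m n : WithTop ℕ∞} (hu : ContDiffAt ℝ n u q) (hmn : m + 1 ≤ n) :
    ContDiffAt ℝ m (pd1 u) q :=
  (hu.fderiv_right hmn).clm_apply contDiffAt_const

lemma contDiffAt_pd2 {m n : WithTop ℕ∞} (hu : ContDiffAt ℝ n u q) (hmn : m + 1 ≤ n) :
    ContDiffAt ℝ m (pd2 u) q :=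
  (hu.fderiv_right hmn).clm_apply contDiffAt_const

lemma analyticAt_pd1 [CompleteSpace E] (hu : AnalyticAt ℝ u q) : AnalyticAt ℝ (pd1 u) q :=
  ((ContinuousLinearMap.apply ℝ E ((1 : ℝ), (0 : ℝ))).analyticAt _).comp hu.fderiv

lemma analyticAt_pd2 [CompleteSpace E] (hu : AnalyticAt ℝ u q) : AnalyticAt ℝ (pd2 u) q :=
  ((ContinuousLinearMap.apply ℝ E ((0 : ℝ), (1 : ℝ))).analyticAt _).comp hu.fderiv

lemma pd1_congr (h : u =ᶠ[𝓝 q] v) : pd1 u =ᶠ[𝓝 q] pd1 v :=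
  h.fderiv.mono fun _ hx => by rw [pd1, pd1, hx]

lemma pd2_congr (h : u =ᶠ[𝓝 q] v) : pd2 u =ᶠ[𝓝 q] pd2 v :=
  h.fderiv.mono fun _ hx => by rw [pd2, pd2, hx]

lemma pd1_neg (u : ℝ × ℝ → E) : pd1 (-u) = -pd1 u := by
  funext q
  simp only [pd1, fderiv_neg, Pi.neg_apply, _root_.neg_apply]

lemma pd2_neg (u : ℝ × ℝ → E) : pd2 (-u) = -pd2 u := by
  funext q
  simp only [pd2, fderiv_neg, Pi.neg_apply, _root_.neg_apply]

end PartialDerivatives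

/-- The total differential of `u` at `q` is `du = a dx + b dy`. It packages differentiability with
the values of both partial derivatives, so that the rules of calculus apply to the two at once. -/
def HasPartialsAt (u : ℝ × ℝ → ℝ) (a b : ℝ) (q : ℝ × ℝ) : Prop :=
  HasFDerivAt u (a • ContinuousLinearMap.fst ℝ ℝ ℝ + b • ContinuousLinearMap.snd ℝ ℝ ℝ) q

namespace HasPartialsAt

variable {u v : ℝ × ℝ → ℝ} {a b c d : ℝ} {q : ℝ × ℝ}

lemma pd1_eq (h : HasPartialsAt u a b q) : pd1 u q = a := by
  rw [pd1, h.fderiv]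
  simp

lemma pd2_eq (h : HasPartialsAt u a b q) : pd2 u q = b := by
  rw [pd2, h.fderiv]
  simp

lemma congr_partials (h : HasPartialsAt u a b q) (ha : a = c) (hb : b = d) :
    HasPartialsAt u c d q :=
  ha ▸ hb ▸ h

lemma congr_of_eventuallyEq (h : HasPartialsAt u a b q) (hvu : v =ᶠ[𝓝 q] u) :
    HasPartialsAt v a b q :=
  HasFDerivAt.congr_of_eventuallyEq h hvu

lemma const (r : ℝ) : HasPartialsAt (fun _ => r) 0 0 q := by
  simpa [HasPartialsAt] using hasFDerivAt_const r q

lemma fst : HasPartialsAt Prod.fst 1 0 q := by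
  simpa [HasPartialsAt] using hasFDerivAt_fst

lemma snd : HasPartialsAt Prod.snd 0 1 q := by
  simpa [HasPartialsAt] using hasFDerivAt_snd

lemma add (hu : HasPartialsAt u a b q) (hv : HasPartialsAt v c d q) :
    HasPartialsAt (fun x => u x + v x) (a + c) (b + d) q :=
  (HasFDerivAt.fun_add hu hv).congr_fderiv (by module)

lemma sub (hu : HasPartialsAt u a b q) (hv : HasPartialsAt v c d q) :
    HasPartialsAt (fun x => u x - v x) (a - c) (b - d) q :=
  (HasFDerivAt.fun_sub hu hv).congr_fderiv (by module)

lemma mul (hu : HasPartialsAt u a b q) (hv : HasPartialsAt v c d q) :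
    HasPartialsAt (fun x => u x * v x) (a * v q + u q * c) (b * v q + u q * d) q :=
  (HasFDerivAt.fun_mul hu hv).congr_fderiv (by module)

lemma const_mul (r : ℝ) (hu : HasPartialsAt u a b q) :
    HasPartialsAt (fun x => r * u x) (r * a) (r * b) q :=
  ((const r).mul hu).congr_partials (by ring) (by ring)

lemma sq (hu : HasPartialsAt u a b q) :
    HasPartialsAt (fun x => u x ^ 2) (2 * u q * a) (2 * u q * b) q := by
  simp only [pow_two]
  exact (hu.mul hu).congr_partials (by ring) (by ring)

lemma div (hu : HasPartialsAt u a b q) (hv : HasPartialsAt v c d q) (hq : v q ≠ 0) :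
    HasPartialsAt (fun x => u x / v x) ((a * v q - u q * c) / v q ^ 2)
      ((b * v q - u q * d) / v q ^ 2) q := by
  have hinv : HasPartialsAt (fun x => (v x)⁻¹) (-c / v q ^ 2) (-d / v q ^ 2) q :=
    ((hasDerivAt_inv hq).comp_hasFDerivAt q hv).congr_fderiv (by module)
  simp only [div_eq_mul_inv]
  exact (hu.mul hinv).congr_partials (by field_simp; ring) (by field_simp; ring)

lemma comp {X Y : ℝ × ℝ → ℝ} {a' b' : ℝ} (hu : HasPartialsAt u a b (X q, Y q))
    (hX : HasPartialsAt X c d q) (hY : HasPartialsAt Y a' b' q) :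
    HasPartialsAt (fun x => u (X x, Y x)) (a * c + b * a') (a * d + b * b') q := by
  refine (HasFDerivAt.comp (g := u) (f := fun x => (X x, Y x)) q hu (hX.prodMk hY)).congr_fderiv ?_
  ext <;> simp

lemma comp_hasDerivAt {α β : ℝ → ℝ} {α' β' t : ℝ} (hu : HasPartialsAt u a b (α t, β t))
    (hα : HasDerivAt α α' t) (hβ : HasDerivAt β β' t) :
    HasDerivAt (fun r => u (α r, β r)) (a * α' + b * β') t := by
  simpa [Function.comp_def] using
    HasFDerivAt.comp_hasDerivAt (l := u) (f := fun r => (α r, β r)) t hu (hα.prodMk hβ)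

end HasPartialsAt

lemma hasPartialsAt_pd {u : ℝ × ℝ → ℝ} {q : ℝ × ℝ} (hu : DifferentiableAt ℝ u q) :
    HasPartialsAt u (pd1 u q) (pd2 u q) q := by
  refine hu.hasFDerivAt.congr_fderiv ?_
  ext <;> simp [pd1, pd2]

lemma hasPartialsAt_pd1 {u : ℝ × ℝ → ℝ} {q : ℝ × ℝ} (hu : ContDiffAt ℝ 2 u q) :
    HasPartialsAt (pd1 u) (pd1 (pd1 u) q) (pd2 (pd1 u) q) q :=
  hasPartialsAt_pd ((contDiffAt_pd1 (m := 1) hu le_rfl).differentiableAt one_ne_zero)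

lemma hasPartialsAt_pd2 {u : ℝ × ℝ → ℝ} {q : ℝ × ℝ} (hu : ContDiffAt ℝ 2 u q) :
    HasPartialsAt (pd2 u) (pd2 (pd1 u) q) (pd2 (pd2 u) q) q :=
  pd1_pd2_comm hu ▸
    hasPartialsAt_pd ((contDiffAt_pd2 (m := 1) hu le_rfl).differentiableAt one_ne_zero)

/-! ### The degenerate operator -/

/-- The Keldysh type operator `4 s ∂_s² + 2 ∂_s + ∂_τ²`, to which the zero mean curvature equation
is reduced by a hodograph transformation. Under `s = w²` it becomes the Laplacian `∂_w² + ∂_τ²`,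
under `s = -w²` the wave operator `∂_τ² - ∂_w²`. -/
noncomputable def keldysh (u : ℝ × ℝ → ℝ) (q : ℝ × ℝ) : ℝ :=
  4 * q.1 * pd1 (pd1 u) q + 2 * pd1 u q + pd2 (pd2 u) q

section Keldysh

variable {u v : ℝ × ℝ → ℝ} {q : ℝ × ℝ}

lemma keldysh_congr (h : u =ᶠ[𝓝 q] v) : keldysh u q = keldysh v q := by
  rw [keldysh, keldysh, (pd1_congr h).eq_of_nhds, (pd1_congr (pd1_congr h)).eq_of_nhds,
    (pd2_congr (pd2_congr h)).eq_of_nhds]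

lemma keldysh_sub (hu : ContDiffAt ℝ 2 u q) (hv : ContDiffAt ℝ 2 v q) :
    keldysh (fun x => u x - v x) q = keldysh u q - keldysh v q := by
  have hfirst : ∀ᶠ x in 𝓝 q,
      HasPartialsAt (fun y => u y - v y) (pd1 u x - pd1 v x) (pd2 u x - pd2 v x) x := by
    filter_upwards [hu.eventually (by simp), hv.eventually (by simp)] with x hux hvx
    exact (hasPartialsAt_pd (hux.differentiableAt two_ne_zero)).sub
      (hasPartialsAt_pd (hvx.differentiableAt two_ne_zero))
  have h11 := ((hasPartialsAt_pd1 hu).sub (hasPartialsAt_pd1 hv)).congr_of_eventuallyEq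
    (hfirst.mono fun x hx => hx.pd1_eq)
  have h22 := ((hasPartialsAt_pd2 hu).sub (hasPartialsAt_pd2 hv)).congr_of_eventuallyEq
    (hfirst.mono fun x hx => hx.pd2_eq)
  rw [keldysh, keldysh, keldysh, h11.pd1_eq, h22.pd2_eq, hfirst.self_of_nhds.pd1_eq]
  ring

lemma analyticAt_keldysh (hu : AnalyticAt ℝ u q) : AnalyticAt ℝ (keldysh u) q :=
  (((analyticAt_const.mul analyticAt_fst).mul (analyticAt_pd1 (analyticAt_pd1 hu))).add
    (analyticAt_const.mul (analyticAt_pd1 hu))).add (analyticAt_pd2 (analyticAt_pd2 hu))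

/-! ### The hyperbolic side -/

/- With `D (w, x) = v (-w², x)`, the derivative of `D_w + σ D_x` along the characteristic
`x + σ w = c` is `D_ww - D_xx`. -/
lemma hasDerivAt_characteristic {σ c t : ℝ} (hσ : σ ^ 2 = 1)
    (hv : ContDiffAt ℝ 2 v (-t ^ 2, c - σ * t)) :
    HasDerivAt (fun r => -(2 * r) * pd1 v (-r ^ 2, c - σ * r) + σ * pd2 v (-r ^ 2, c - σ * r))
      (-keldysh v (-t ^ 2, c - σ * t)) t := by
  have hs : HasDerivAt (fun k : ℝ => -k ^ 2) (-(2 * t)) t := by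
    simpa using ((hasDerivAt_id t).fun_pow 2).fun_neg
  have hx : HasDerivAt (fun r => c - σ * r) (-σ) t := by
    simpa using ((hasDerivAt_id t).const_mul σ).const_sub c
  have hr : HasDerivAt (fun r : ℝ => -(2 * r)) (-2) t := by
    simpa using ((hasDerivAt_id t).const_mul (2 : ℝ)).fun_neg
  have h1 := (hasPartialsAt_pd1 hv).comp_hasDerivAt hs hx
  have h2 := (hasPartialsAt_pd2 hv).comp_hasDerivAt hs hx
  refine ((hr.mul h1).add (h2.const_mul σ)).congr_deriv ?_
  rw [keldysh]
  linear_combination -pd2 (pd2 v) (-t ^ 2, c - σ * t) * hσ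

lemma eq_of_hasDerivAt_zero {φ : ℝ → ℝ} {a b : ℝ} (hab : a ≤ b)
    (hφ : ∀ t ∈ Icc a b, HasDerivAt φ 0 t) : φ b = φ a :=
  constant_of_has_deriv_right_zero (fun t ht => (hφ t ht).continuousAt.continuousWithinAt)
    (fun t ht => (hφ t ⟨ht.1, ht.2.le⟩).hasDerivWithinAt) b ⟨hab, le_rfl⟩

section CharacteristicTriangle

variable {x₀ r : ℝ} (hv : ∀ t x, 0 ≤ t → t + |x - x₀| < r →
    ContDiffAt ℝ 2 v (-t ^ 2, x) ∧ keldysh v (-t ^ 2, x) = 0)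
  (h0 : ∀ x, |x - x₀| < r → v (0, x) = 0)

include hv h0

lemma pd2_eq_zero_on_degeneracy_line {x : ℝ} (hx : |x - x₀| < r) : pd2 v (0, x) = 0 := by
  have hC : ContDiffAt ℝ 2 v (0, x) := by simpa using (hv 0 x le_rfl (by simpa using hx)).1
  have hder := (hasPartialsAt_pd (hC.differentiableAt two_ne_zero)).comp_hasDerivAt
    (hasDerivAt_const x 0) (hasDerivAt_id x)
  have hloc : (fun y => v (0, y)) =ᶠ[𝓝 x] fun _ => 0 := by
    have hnear : ∀ᶠ y in 𝓝 x, |y - x₀| < r :=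
      (by fun_prop : ContinuousAt (fun y => |y - x₀|) x).eventually_lt_const hx
    exact hnear.mono h0
  simpa using hder.unique ((hasDerivAt_const x (0 : ℝ)).congr_of_eventuallyEq hloc)

lemma characteristic_derivative_eq_zero {σ t x : ℝ} (hσ : |σ| = 1) (ht : 0 ≤ t)
    (hx : t + |x - x₀| < r) : -(2 * t) * pd1 v (-t ^ 2, x) + σ * pd2 v (-t ^ 2, x) = 0 := by
  set c := x + σ * t with hc
  have hmem : ∀ k ∈ Icc 0 t, k + |c - σ * k - x₀| < r := by
    intro k hk
    calc k + |c - σ * k - x₀| = k + |(x - x₀) + σ * (t - k)| := by rw [hc]; ring_nf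
      _ ≤ k + (|x - x₀| + |σ * (t - k)|) := by gcongr; exact abs_add_le _ _
      _ = t + |x - x₀| := by rw [abs_mul, hσ, one_mul, abs_of_nonneg (sub_nonneg.2 hk.2)]; ring
      _ < r := hx
  have hconst := eq_of_hasDerivAt_zero ht fun k hk => by
    obtain ⟨hC, hK⟩ := hv k _ hk.1 (hmem k hk)
    simpa only [hK, neg_zero] using
      hasDerivAt_characteristic (by rw [← sq_abs, hσ, one_pow]) hC
  have hbase : pd2 v (0, c) = 0 :=
    pd2_eq_zero_on_degeneracy_line hv h0 (by simpa using hmem 0 ⟨le_rfl, ht⟩)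
  simpa [hbase, show c - σ * t = x from add_sub_cancel_right x _] using hconst

lemma eq_zero_of_characteristic_triangle {w : ℝ} (hw : 0 ≤ w) (hwr : w < r) :
    v (-w ^ 2, x₀) = 0 := by
  have hder : ∀ t ∈ Icc 0 w, HasDerivAt (fun t => v (-t ^ 2, x₀)) 0 t := by
    intro t ht
    have htr : t + |x₀ - x₀| < r := by simpa using ht.2.trans_lt hwr
    have hs : HasDerivAt (fun k : ℝ => -k ^ 2) (-(2 * t)) t := by
      simpa using ((hasDerivAt_id t).fun_pow 2).fun_neg
    have hC := (hv t x₀ ht.1 htr).1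
    refine ((hasPartialsAt_pd (hC.differentiableAt two_ne_zero)).comp_hasDerivAt hs
      (hasDerivAt_const t x₀)).congr_deriv ?_
    have hplus := characteristic_derivative_eq_zero hv h0 abs_one ht.1 htr
    have hminus := characteristic_derivative_eq_zero hv h0 (σ := -1) (by simp) ht.1 htr
    linear_combination (hplus + hminus) / 2
  calc v (-w ^ 2, x₀) = v (-0 ^ 2, x₀) := eq_of_hasDerivAt_zero hw hder
    _ = 0 := by simpa using h0 x₀ (by simpa using hw.trans_lt hwr)

end CharacteristicTriangle

lemma eventually_eq_zero_of_keldysh {a : ℝ}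
    (hv : ∀ᶠ q in 𝓝 ((0 : ℝ), a), ContDiffAt ℝ 2 v q ∧ keldysh v q = 0)
    (h0 : ∀ᶠ q in 𝓝 ((0 : ℝ), a), q.1 = 0 → v q = 0) :
    ∀ᶠ q in 𝓝 ((0 : ℝ), a), q.1 ≤ 0 → v q = 0 := by
  have hfold : Tendsto (fun z : ℝ × ℝ => (-z.1 ^ 2, z.2)) (𝓝 (0, a)) (𝓝 (0, a)) := by
    have : Continuous fun z : ℝ × ℝ => (-z.1 ^ 2, z.2) := by fun_prop
    simpa using this.tendsto (0, a)
  obtain ⟨R, hR, hball⟩ := Metric.eventually_nhds_iff_ball.1 (hfold.eventually (hv.and h0))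
  have hdom : ∀ t x : ℝ, |t| < R → |x - a| < R →
      (ContDiffAt ℝ 2 v (-t ^ 2, x) ∧ keldysh v (-t ^ 2, x) = 0) ∧
        (-t ^ 2 = 0 → v (-t ^ 2, x) = 0) :=
    fun t x ht hx => hball (t, x) (by simpa [Prod.dist_eq, Real.dist_eq] using ⟨ht, hx⟩)
  have hw : ∀ᶠ q in 𝓝 ((0 : ℝ), a), √(-q.1) < R / 2 :=
    (by fun_prop : ContinuousAt (fun q : ℝ × ℝ => √(-q.1)) (0, a)).eventually_lt_const
      (by simpa using hR)
  have hx : ∀ᶠ q in 𝓝 ((0 : ℝ), a), |q.2 - a| < R / 2 :=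
    (by fun_prop : ContinuousAt (fun q : ℝ × ℝ => |q.2 - a|) (0, a)).eventually_lt_const
      (by simpa using hR)
  filter_upwards [hw, hx] with q hqw hqx hq
  have hclose : ∀ x, |x - q.2| < R / 2 → |x - a| < R := fun x hx => by
    linarith [abs_sub_le x q.2 a]
  have hvan := eq_zero_of_characteristic_triangle (x₀ := q.2) (r := R / 2)
    (fun t x ht hx => (hdom t x (by rw [abs_of_nonneg ht]; linarith [abs_nonneg (x - q.2)])
      (hclose x (by linarith))).1)
    (fun x hx => by simpa using (hdom 0 x (by simpa using hR) (hclose x hx)).2)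
    (Real.sqrt_nonneg (-q.1)) hqw
  simpa [Real.sq_sqrt (neg_nonneg.2 hq)] using hvan

end Keldysh

/-! ### The elliptic side -/

section Elliptic

open ComplexConjugate InnerProductSpace Laplacian

lemma laplacian_complexPlane_eq_fderiv {E : Type*} [NormedAddCommGroup E] [NormedSpace ℝ E]
    {U : ℂ → E} {z : ℂ} (hU : ContDiffAt ℝ 2 U z) :
    Δ U z = fderiv ℝ (fun x => fderiv ℝ U x 1) z 1
      + fderiv ℝ (fun x => fderiv ℝ U x Complex.I) z Complex.I := by
  rw [laplacian_eq_iteratedFDeriv_complexPlane, fderiv_fderiv_apply hU, fderiv_fderiv_apply hU]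
  simp [iteratedFDeriv_two_apply]

lemma tendsto_im_sq_re (a : ℝ) :
    Tendsto (fun z : ℂ => (z.im ^ 2, z.re)) (𝓝 (a : ℂ)) (𝓝 (0, a)) := by
  have : Continuous fun z : ℂ => (z.im ^ 2, z.re) := by fun_prop
  simpa using this.tendsto (a : ℂ)

lemma contDiffAt_comp_im_sq_re {u : ℝ × ℝ → ℝ} {z : ℂ} {n : WithTop ℕ∞}
    (hu : ContDiffAt ℝ n u (z.im ^ 2, z.re)) :
    ContDiffAt ℝ n (fun y : ℂ => u (y.im ^ 2, y.re)) z :=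
  ContDiffAt.comp (g := u) z hu
    ((Complex.imCLM.contDiff.pow 2).prodMk Complex.reCLM.contDiff).contDiffAt

lemma HasPartialsAt.comp_im_sq_re {u : ℝ × ℝ → ℝ} {a b : ℝ} {z : ℂ}
    (hu : HasPartialsAt u a b (z.im ^ 2, z.re)) :
    HasFDerivAt (fun y : ℂ => u (y.im ^ 2, y.re))
      ((2 * z.im * a) • Complex.imCLM + b • Complex.reCLM) z := by
  have hfold : HasFDerivAt (fun y : ℂ => (y.im ^ 2, y.re)) _ z :=
    ((Complex.imCLM.hasFDerivAt (x := z)).pow 2).prodMk Complex.reCLM.hasFDerivAt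
  refine (HasFDerivAt.comp (g := u) (f := fun y : ℂ => (y.im ^ 2, y.re)) z hu hfold).congr_fderiv ?_
  ext v
  simp only [Nat.add_one_sub_one, pow_one, nsmul_eq_mul, Nat.cast_ofNat,
    ContinuousLinearMap.add_comp, ContinuousLinearMap.smul_comp, ContinuousLinearMap.fst_comp_prod,
    ContinuousLinearMap.snd_comp_prod, add_apply, smul_apply, smul_eq_mul, Complex.imCLM_apply,
    Complex.reCLM_apply]
  ring

lemma laplacian_comp_im_sq_re {u : ℝ × ℝ → ℝ} {z : ℂ}
    (hu : ContDiffAt ℝ 2 u (z.im ^ 2, z.re)) :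
    Δ (fun y : ℂ => u (y.im ^ 2, y.re)) z = keldysh u (z.im ^ 2, z.re) := by
  have hfirst : ∀ᶠ y in 𝓝 z, HasFDerivAt (fun y : ℂ => u (y.im ^ 2, y.re))
      ((2 * y.im * pd1 u (y.im ^ 2, y.re)) • Complex.imCLM
        + pd2 u (y.im ^ 2, y.re) • Complex.reCLM) y := by
    have hfold : ContinuousAt (fun z : ℂ => (z.im ^ 2, z.re)) z := by fun_prop
    filter_upwards [hfold.eventually (hu.eventually (by simp))] with y hy
    exact (hasPartialsAt_pd (hy.differentiableAt two_ne_zero)).comp_im_sq_re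
  have hre : (fun y => fderiv ℝ (fun y : ℂ => u (y.im ^ 2, y.re)) y 1)
      =ᶠ[𝓝 z] fun y => pd2 u (y.im ^ 2, y.re) :=
    hfirst.mono fun y hy => by simp [hy.fderiv]
  have him : (fun y => fderiv ℝ (fun y : ℂ => u (y.im ^ 2, y.re)) y Complex.I)
      =ᶠ[𝓝 z] fun y => 2 * y.im * pd1 u (y.im ^ 2, y.re) :=
    hfirst.mono fun y hy => by simp [hy.fderiv]
  have h2im : HasFDerivAt (fun y : ℂ => 2 * y.im) ((2 : ℝ) • Complex.imCLM) z :=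
    (Complex.imCLM.hasFDerivAt (x := z)).const_mul 2
  rw [laplacian_complexPlane_eq_fderiv (contDiffAt_comp_im_sq_re hu), hre.fderiv_eq,
    him.fderiv_eq, (hasPartialsAt_pd2 hu).comp_im_sq_re.fderiv,
    (h2im.fun_mul (hasPartialsAt_pd1 hu).comp_im_sq_re).fderiv, keldysh]
  simp only [add_apply, smul_apply, smul_eq_mul, Complex.imCLM_apply, Complex.reCLM_apply,
    Complex.one_im, Complex.one_re, Complex.I_im, Complex.I_re]
  ring

lemma harmonicAt_comp_im_sq_re {u : ℝ × ℝ → ℝ} {a : ℝ}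
    (hu : ∀ᶠ q in 𝓝 ((0 : ℝ), a), ContDiffAt ℝ 2 u q ∧ keldysh u q = 0) :
    HarmonicAt (fun z : ℂ => u (z.im ^ 2, z.re)) (a : ℂ) := by
  have hfold := (tendsto_im_sq_re a).eventually hu
  refine ⟨contDiffAt_comp_im_sq_re hfold.self_of_nhds.1, hfold.mono fun z hz => ?_⟩
  rw [laplacian_comp_im_sq_re hz.1, hz.2, Pi.zero_apply]

lemma exists_analyticAt_re_eq_of_harmonicAt {U : ℂ → ℝ} {z₀ : ℂ} (hU : HarmonicAt U z₀) :
    ∃ F : ℂ → ℂ, AnalyticAt ℂ F z₀ ∧ ∀ᶠ z in 𝓝 z₀, (F z).re = U z := by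
  obtain ⟨R, hR, hball⟩ := Metric.eventually_nhds_iff_ball.1 hU.eventually
  obtain ⟨F, hF, hFU⟩ :=
    HarmonicOnNhd.exists_analyticOnNhd_ball_re_eq fun z hz => hball z hz
  exact ⟨F, hF z₀ (Metric.mem_ball_self hR),
    eventually_of_mem (Metric.ball_mem_nhds z₀ hR) fun _ hz => hFU hz⟩

lemma radius_le_radius_of_norm_le {𝕜 𝕜' E F E' F' : Type*} [NontriviallyNormedField 𝕜]
    [NormedAddCommGroup E] [NormedSpace 𝕜 E] [NormedAddCommGroup F] [NormedSpace 𝕜 F]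
    [NontriviallyNormedField 𝕜'] [NormedAddCommGroup E'] [NormedSpace 𝕜' E']
    [NormedAddCommGroup F'] [NormedSpace 𝕜' F']
    {p : FormalMultilinearSeries 𝕜 E F} {p' : FormalMultilinearSeries 𝕜' E' F'}
    (h : ∀ n, ‖p' n‖ ≤ ‖p n‖) : p.radius ≤ p'.radius := by
  refine ENNReal.le_of_forall_nnreal_lt fun r hr => ?_
  obtain ⟨C, -, hC⟩ := p.norm_mul_pow_le_of_lt_radius hr
  exact p'.le_radius_of_bound C fun n =>
    (mul_le_mul_of_nonneg_right (h n) (by positivity)).trans (hC n)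

lemma exists_hasSum_re_pow_of_harmonicAt {U : ℂ → ℝ} {a : ℝ} (hU : HarmonicAt U a)
    (heven : ∀ z : ℂ, U (conj z) = U z) :
    ∃ c : ℕ → ℝ, 0 < (FormalMultilinearSeries.ofScalars ℝ c).radius ∧
      ∀ᶠ z : ℂ in 𝓝 (a : ℂ), HasSum (fun n => c n * ((z - a) ^ n).re) (U z) := by
  obtain ⟨F, ⟨p, hp⟩, hFU⟩ := exists_analyticAt_re_eq_of_harmonicAt hU
  refine ⟨fun n => (p.coeff n).re,
    hp.radius_pos.trans_le (radius_le_radius_of_norm_le fun n => ?_), ?_⟩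
  · rw [FormalMultilinearSeries.ofScalars_norm, FormalMultilinearSeries.norm_apply_eq_norm_coef]
    exact Complex.abs_re_le_norm _
  have hsum : ∀ᶠ z : ℂ in 𝓝 (a : ℂ), HasSum (fun n => ((z - a) ^ n * p.coeff n).re) (U z) := by
    filter_upwards [hasFPowerSeriesAt_iff'.1 hp, hFU] with z hz hFz
    simpa only [Complex.reCLM_apply, smul_eq_mul, hFz] using Complex.reCLM.hasSum hz
  have hconj : Tendsto conj (𝓝 (a : ℂ)) (𝓝 (a : ℂ)) := by
    simpa using Complex.continuous_conj.tendsto (a : ℂ)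
  filter_upwards [hsum, hconj.eventually hsum] with z hz hz'
  rw [heven] at hz'
  have hmean := (hz.add hz').div_const 2
  rw [add_self_div_two] at hmean
  refine hmean.congr_fun fun n => ?_
  have : (conj z - a) ^ n = conj ((z - a) ^ n) := by
    simp only [map_pow, map_sub, Complex.conj_ofReal]
  rw [this, Complex.mul_re, Complex.mul_re, Complex.conj_re, Complex.conj_im]
  ring

/-- The operator `(τ - a) + N` on `ℝ²` at `q = (s, τ)`, where `N = (0, -s/δ; δ, 0)`, so that
`N² = -s`. It is affine in `s` and plays the role of the complex number `τ - a + i√s`. The scale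
`δ` makes its norm small near `(0, a)`. -/
noncomputable def rootMat (a δ : ℝ) (q : ℝ × ℝ) : (ℝ × ℝ) →L[ℝ] (ℝ × ℝ) :=
  (q.2 - a) • (1 : (ℝ × ℝ) →L[ℝ] (ℝ × ℝ))
    - (q.1 / δ) • ((ContinuousLinearMap.inl ℝ ℝ ℝ).comp (ContinuousLinearMap.snd ℝ ℝ ℝ))
    + δ • ((ContinuousLinearMap.inr ℝ ℝ ℝ).comp (ContinuousLinearMap.fst ℝ ℝ ℝ))

lemma rootMat_apply (a δ : ℝ) (q v : ℝ × ℝ) :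
    rootMat a δ q v = ((q.2 - a) * v.1 - q.1 / δ * v.2, (q.2 - a) * v.2 + δ * v.1) := by
  ext <;> simp [rootMat]

lemma analyticAt_rootMat (a δ : ℝ) (q : ℝ × ℝ) : AnalyticAt ℝ (rootMat a δ) q :=
  (((analyticAt_snd.sub analyticAt_const).smul analyticAt_const).sub
    (analyticAt_fst.div_const.smul analyticAt_const)).add analyticAt_const

lemma norm_rootMat_le {δ : ℝ} (hδ : 0 ≤ δ) (a : ℝ) : ‖rootMat a δ (0, a)‖ ≤ δ := by
  refine ContinuousLinearMap.opNorm_le_bound _ hδ fun v => ?_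
  rw [rootMat_apply]
  simpa [Prod.norm_def, abs_of_nonneg hδ] using
    ⟨by positivity, mul_le_mul_of_nonneg_left (le_max_left |v.1| |v.2|) hδ⟩

lemma rootMat_pow_apply {a δ : ℝ} (hδ : δ ≠ 0) (z : ℂ) (n : ℕ) :
    ((rootMat a δ (z.im ^ 2, z.re) ^ n) (1, 0)).1 = ((z - a) ^ n).re ∧
      z.im * ((rootMat a δ (z.im ^ 2, z.re) ^ n) (1, 0)).2 = δ * ((z - a) ^ n).im := by
  induction n with
  | zero => simp
  | succ n ih =>
    obtain ⟨hre, him⟩ := ih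
    rw [pow_succ', mul_apply_eq_comp, rootMat_apply, pow_succ' (z - a)]
    simp only [Complex.mul_im, Complex.mul_re, Complex.sub_re, Complex.sub_im, Complex.ofReal_re,
      Complex.ofReal_im, sub_zero, ← hre]
    refine ⟨?_, by linear_combination (z.re - a) * him⟩
    field_simp
    linear_combination -z.im * him

lemma exists_analyticAt_of_harmonicAt {U : ℂ → ℝ} {a : ℝ} (hU : HarmonicAt U a)
    (heven : ∀ z : ℂ, U (conj z) = U z) :
    ∃ g : ℝ × ℝ → ℝ, AnalyticAt ℝ g (0, a) ∧ ∀ᶠ z : ℂ in 𝓝 (a : ℂ), U z = g (z.im ^ 2, z.re) := by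
  obtain ⟨c, hc, hsum⟩ := exists_hasSum_re_pow_of_harmonicAt hU heven
  obtain ⟨δ, hδ0, hδ⟩ := ENNReal.lt_iff_exists_nnreal_btwn.1 hc
  set A := (ℝ × ℝ) →L[ℝ] (ℝ × ℝ)
  set P := FormalMultilinearSeries.ofScalars A c
  have hrad : (δ : ENNReal) < P.radius :=
    hδ.trans_le (radius_le_radius_of_norm_le fun n => by
      rw [FormalMultilinearSeries.ofScalars_norm, FormalMultilinearSeries.ofScalars_norm])
  have hP := P.hasFPowerSeriesOnBall (bot_le.trans_lt hrad)
  have hmem : rootMat a δ (0, a) ∈ Metric.eball 0 P.radius := by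
    rw [Metric.mem_eball, edist_zero_right]
    exact lt_of_le_of_lt (by exact_mod_cast norm_rootMat_le δ.coe_nonneg a) hrad
  let ev : A →L[ℝ] ℝ := (ContinuousLinearMap.fst ℝ ℝ ℝ).comp
    (ContinuousLinearMap.apply ℝ (ℝ × ℝ) ((1 : ℝ), (0 : ℝ)))
  have hev (x : A) : ev x = (x (1, 0)).1 := rfl
  refine ⟨fun q => ev (P.sum (rootMat a δ q)),
    (ev.analyticAt _).comp ((hP.analyticAt_of_mem hmem).comp (analyticAt_rootMat a δ _)), ?_⟩
  have hnear : ∀ᶠ q in 𝓝 ((0 : ℝ), a), rootMat a δ q ∈ Metric.eball 0 P.radius :=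
    (analyticAt_rootMat a δ _).continuousAt.eventually_mem (Metric.isOpen_eball.mem_nhds hmem)
  filter_upwards [hsum, (tendsto_im_sq_re a).eventually hnear] with z hz hzP
  refine hz.unique ?_
  convert ev.hasSum (hP.hasSum hzP) using 1
  · funext n
    rw [FormalMultilinearSeries.ofScalars_apply_eq, map_smul, smul_eq_mul, hev,
      (rootMat_pow_apply (NNReal.coe_pos.2 (by exact_mod_cast hδ0)).ne' z n).1]
  · rw [zero_add]

lemma exists_analyticAt_eq_of_keldysh {u : ℝ × ℝ → ℝ} {a : ℝ}
    (hu : ∀ᶠ q in 𝓝 ((0 : ℝ), a), ContDiffAt ℝ 2 u q ∧ keldysh u q = 0) :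
    ∃ g : ℝ × ℝ → ℝ, AnalyticAt ℝ g (0, a) ∧ ∀ᶠ q in 𝓝 ((0 : ℝ), a), 0 ≤ q.1 → u q = g q := by
  obtain ⟨g, hg, hgu⟩ := exists_analyticAt_of_harmonicAt (harmonicAt_comp_im_sq_re hu) (by simp)
  have hroot : Tendsto (fun q : ℝ × ℝ => (⟨q.2, √q.1⟩ : ℂ)) (𝓝 (0, a)) (𝓝 (a : ℂ)) := by
    have : Continuous fun q : ℝ × ℝ => (⟨q.2, √q.1⟩ : ℂ) := by
      simp only [Complex.mk_eq_add_mul_I]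
      fun_prop
    simpa [Complex.mk_eq_add_mul_I] using this.tendsto (0, a)
  refine ⟨g, hg, (hroot.eventually hgu).mono fun q hq hq0 => ?_⟩
  simpa [Real.sq_sqrt hq0] using hq

end Elliptic

/-! ### Analyticity across the degeneracy line -/

lemma eventually_eq_zero_of_analyticAt {E F : Type*} [NormedAddCommGroup E] [NormedSpace ℝ E]
    [NormedAddCommGroup F] [NormedSpace ℝ F] [CompleteSpace F] {h : E → F} {W : Set E} {x : E}
    (hh : AnalyticAt ℝ h x) (hW : IsOpen W) (hx : x ∈ closure W)
    (h0 : ∀ᶠ y in 𝓝 x, y ∈ W → h y = 0) : ∀ᶠ y in 𝓝 x, h y = 0 := by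
  obtain ⟨r, hr, hball⟩ := Metric.eventually_nhds_iff_ball.1 (hh.eventually_analyticAt.and h0)
  obtain ⟨y, hyr, hyW⟩ := mem_closure_iff.1 hx _ Metric.isOpen_ball (Metric.mem_ball_self hr)
  have hzero : EqOn h 0 (Metric.ball x r) :=
    AnalyticOnNhd.eqOn_zero_of_preconnected_of_eventuallyEq_zero (fun z hz => (hball z hz).1)
      (convex_ball x r).isPreconnected hyr <| by
        filter_upwards [hW.mem_nhds hyW, Metric.isOpen_ball.mem_nhds hyr] with z hzW hzr
        exact (hball z hzr).2 hzW
  exact eventually_of_mem (Metric.ball_mem_nhds x hr) hzero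

lemma eventually_keldysh_eq_zero {u g : ℝ × ℝ → ℝ} {a : ℝ}
    (hu : ∀ᶠ q in 𝓝 ((0 : ℝ), a), keldysh u q = 0) (hg : AnalyticAt ℝ g (0, a))
    (hug : ∀ᶠ q in 𝓝 ((0 : ℝ), a), 0 ≤ q.1 → u q = g q) :
    ∀ᶠ q in 𝓝 ((0 : ℝ), a), keldysh g q = 0 := by
  have hW : IsOpen {q : ℝ × ℝ | 0 < q.1} := isOpen_lt continuous_const continuous_fst
  refine eventually_eq_zero_of_analyticAt (analyticAt_keldysh hg) hW ?_ ?_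
  · have hcl : (0 : ℝ) ∈ closure (Ioi 0) := by simp
    have hW : {q : ℝ × ℝ | 0 < q.1} = Ioi 0 ×ˢ univ := by ext; simp
    rw [hW, closure_prod_eq]
    exact ⟨hcl, by simp⟩
  · filter_upwards [hu, hug.eventually_nhds] with q hq hqu hqW
    rw [← keldysh_congr (hqu.mp <| (hW.eventually_mem hqW).mono fun x hx h => h hx.le), hq]

theorem analyticAt_of_keldysh {u : ℝ × ℝ → ℝ} {a : ℝ}
    (hu : ∀ᶠ q in 𝓝 ((0 : ℝ), a), ContDiffAt ℝ 2 u q ∧ keldysh u q = 0) :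
    AnalyticAt ℝ u (0, a) := by
  obtain ⟨g, hg, hug⟩ := exists_analyticAt_eq_of_keldysh hu
  have hKg := eventually_keldysh_eq_zero (hu.mono fun _ hq => hq.2) hg hug
  have hdiff : ∀ᶠ q in 𝓝 ((0 : ℝ), a), ContDiffAt ℝ 2 (fun x => u x - g x) q ∧
      keldysh (fun x => u x - g x) q = 0 := by
    filter_upwards [hu, hg.eventually_analyticAt, hKg] with q hq hgq hKq
    refine ⟨hq.1.sub hgq.contDiffAt, ?_⟩
    rw [keldysh_sub hq.1 hgq.contDiffAt, hq.2, hKq, sub_zero]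
  have hneg := eventually_eq_zero_of_keldysh hdiff <| by
    filter_upwards [hug] with q hq h0 using sub_eq_zero.2 (hq h0.ge)
  refine hg.congr ?_
  filter_upwards [hug, hneg] with q hpos hneg
  rcases le_total 0 q.1 with h | h
  · exact (hpos h).symm
  · exact (sub_eq_zero.1 (hneg h)).symm

/-! ### The hodograph transformation -/

/-- Hodograph coordinates `(s, τ)`: the gradient of `f` in stereographic projection from `(-1, 0)`,
with the circle `f_x² + f_y² = 1` straightened to the line `s = 0`. -/
noncomputable def hodo (f : ℝ × ℝ → ℝ) (q : ℝ × ℝ) : ℝ × ℝ :=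
  (Bfun f q / (1 + pd1 f q) ^ 2, pd2 f q / (1 + pd1 f q))

/-- The quantity `2 / (1 + f_x)` in hodograph coordinates, the common denominator of the
expressions of `f_x` and `f_y` in these coordinates. -/
def hodoDenom (q : ℝ × ℝ) : ℝ := 1 + q.1 + q.2 ^ 2

/-- The first order system satisfied in hodograph coordinates `(s, τ)` by the parametrization
`(X, Y)` of a zero mean curvature graph `t = f (x, y)` and the null coordinate `Z = f (X, Y) + X`:
the differentials of `X` and `Y` are expressed through that of `Z`. -/
def HodographSystem (Z X Y : ℝ × ℝ → ℝ) (q : ℝ × ℝ) : Prop :=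
  HasPartialsAt X (1 / 2 * ((1 + q.1 - q.2 ^ 2) * pd1 Z q + q.2 * pd2 Z q))
      (1 / 2 * ((1 + q.1 - q.2 ^ 2) * pd2 Z q) - 2 * (q.1 * q.2 * pd1 Z q)) q ∧
    HasPartialsAt Y (q.2 * pd1 Z q - 1 / 2 * pd2 Z q) (2 * (q.1 * pd1 Z q) + q.2 * pd2 Z q) q

section Hodograph

variable {f : ℝ × ℝ → ℝ} {q : ℝ × ℝ}

lemma keldysh_of_hodographSystem {Z X Y : ℝ × ℝ → ℝ} (hZ : ContDiffAt ℝ 2 Z q)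
    (hY : ContDiffAt ℝ 2 Y q) (h : ∀ᶠ x in 𝓝 q, HodographSystem Z X Y x) :
    keldysh Z q = 0 ∧ keldysh X q = 0 ∧ keldysh Y q = 0 := by
  have hZ1 := hasPartialsAt_pd1 hZ
  have hZ2 := hasPartialsAt_pd2 hZ
  have hcoef := ((HasPartialsAt.const (q := q) 1).add .fst).sub (.sq .snd)
  have hX1 := (((hcoef.mul hZ1).add (.mul .snd hZ2)).const_mul (1 / 2)).congr_of_eventuallyEq
    (h.mono fun x hx => hx.1.pd1_eq)
  have hX2 := (((hcoef.mul hZ2).const_mul (1 / 2)).sub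
    (((HasPartialsAt.mul .fst .snd).mul hZ1).const_mul 2)).congr_of_eventuallyEq
    (h.mono fun x hx => hx.1.pd2_eq)
  have hY1 := ((HasPartialsAt.mul .snd hZ1).sub (hZ2.const_mul (1 / 2))).congr_of_eventuallyEq
    (h.mono fun x hx => hx.2.pd1_eq)
  have hY2 := (((HasPartialsAt.mul .fst hZ1).const_mul 2).add
    (.mul .snd hZ2)).congr_of_eventuallyEq (h.mono fun x hx => hx.2.pd2_eq)
  have hKZ : keldysh Z q = 0 := by
    have hcompat := pd1_pd2_comm hY
    rw [hY1.pd2_eq, hY2.pd1_eq] at hcompat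
    rw [keldysh]
    linear_combination 2 * hcompat
  refine ⟨hKZ, ?_, ?_⟩
  · rw [keldysh, hX1.pd1_eq, hX2.pd2_eq, h.self_of_nhds.1.pd1_eq]
    rw [keldysh] at hKZ
    linear_combination (1 + q.1 - q.2 ^ 2) / 2 * hKZ
  · rw [keldysh, hY1.pd1_eq, hY2.pd2_eq, h.self_of_nhds.2.pd1_eq]
    rw [keldysh] at hKZ
    linear_combination q.2 * hKZ

lemma hasPartialsAt_hodoDenom (q : ℝ × ℝ) : HasPartialsAt hodoDenom 1 (2 * q.2) q :=
  (((HasPartialsAt.const 1).add .fst).add (.sq .snd)).congr_partials (by ring) (by ring)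

lemma hasPartialsAt_two_div_hodoDenom_sub_one (hq : hodoDenom q ≠ 0) :
    HasPartialsAt (fun x => 2 / hodoDenom x - 1) (-2 / hodoDenom q ^ 2)
      (-4 * q.2 / hodoDenom q ^ 2) q :=
  (((HasPartialsAt.const 2).div (hasPartialsAt_hodoDenom q) hq).sub (.const 1)).congr_partials
    (by ring) (by ring)

lemma hasPartialsAt_two_mul_div_hodoDenom (hq : hodoDenom q ≠ 0) :
    HasPartialsAt (fun x => 2 * x.2 / hodoDenom x) (-2 * q.2 / hodoDenom q ^ 2)
      (2 * (1 + q.1 - q.2 ^ 2) / hodoDenom q ^ 2) q :=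
  ((HasPartialsAt.const_mul 2 .snd).div (hasPartialsAt_hodoDenom q) hq).congr_partials
    (by ring) (by rw [hodoDenom]; ring)

lemma hodoDenom_hodo (h : 1 + pd1 f q ≠ 0) : hodoDenom (hodo f q) = 2 / (1 + pd1 f q) := by
  simp only [hodoDenom, hodo, Bfun]
  field_simp
  ring

lemma hodoDenom_hodo_ne_zero (h : 1 + pd1 f q ≠ 0) : hodoDenom (hodo f q) ≠ 0 := by
  rw [hodoDenom_hodo h]
  positivity

lemma pd1_eq_of_hodo (h : 1 + pd1 f q ≠ 0) : pd1 f q = 2 / hodoDenom (hodo f q) - 1 := by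
  rw [hodoDenom_hodo h]
  field_simp
  ring

lemma pd2_eq_of_hodo (h : 1 + pd1 f q ≠ 0) :
    pd2 f q = 2 * (hodo f q).2 / hodoDenom (hodo f q) := by
  rw [hodoDenom_hodo h, hodo]
  field_simp

lemma contDiffAt_hodo {n : WithTop ℕ∞} (hf : ContDiffAt ℝ (n + 1) f q) (h : 1 + pd1 f q ≠ 0) :
    ContDiffAt ℝ n (hodo f) q := by
  have h1 := contDiffAt_pd1 hf le_rfl
  have h2 := contDiffAt_pd2 hf le_rfl
  have hden : ContDiffAt ℝ n (fun x => 1 + pd1 f x) q := contDiffAt_const.add h1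
  have hB : ContDiffAt ℝ n (Bfun f) q := (contDiffAt_const.sub (h1.pow 2)).sub (h2.pow 2)
  exact (hB.div (hden.pow 2) (pow_ne_zero 2 h)).prodMk (h2.div hden h)

lemma eventually_one_add_pd1_ne_zero (hf : ContDiffAt ℝ 1 f q) (h : 1 + pd1 f q ≠ 0) :
    ∀ᶠ x in 𝓝 q, 1 + pd1 f x ≠ 0 :=
  (continuousAt_const.add (contDiffAt_pd1 (m := 0) hf (by simp)).continuousAt).eventually_ne h

section Jacobian

/- The hypotheses on the products express that the Hessian of `f` composed with the Jacobian of the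
inverse hodograph transformation is the Jacobian of `(2 / m - 1, 2 τ / m)`. -/
variable {a₁ a₂ b₂ s τ m Xs Xτ Ys Yτ : ℝ} (hm : m ≠ 0)
  (h1 : a₁ * Xs + a₂ * Ys = -2 / m ^ 2) (h2 : a₁ * Xτ + a₂ * Yτ = -4 * τ / m ^ 2)
  (h3 : a₂ * Xs + b₂ * Ys = -2 * τ / m ^ 2)
  (h4 : a₂ * Xτ + b₂ * Yτ = 2 * (1 + s - τ ^ 2) / m ^ 2)

include hm h1 h2 h3 h4

lemma jacobian_relation_of_symmetry : (1 + s - τ ^ 2) * Ys + Xτ + τ * Yτ - 2 * τ * Xs = 0 := by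
  rw [eq_div_iff (pow_ne_zero 2 hm)] at h1 h2 h3 h4
  linear_combination (-1 / 2) * (Xs * h2 - Xτ * h1 - Yτ * h3 + Ys * h4)

/- By Cramer's rule the Hessian times the determinant of the Jacobian is linear in the Jacobian, so
the zero mean curvature equation becomes linear after multiplication by this determinant. -/
lemma jacobian_relation_of_zmc (hms : m = 1 + s + τ ^ 2)
    (hz : (1 - (2 * τ / m) ^ 2) * a₁ + 2 * (2 / m - 1) * (2 * τ / m) * a₂
      + (1 - (2 / m - 1) ^ 2) * b₂ = 0) :
    (1 + s - τ ^ 2) * Yτ - 2 * τ * Xτ - 4 * s * Xs - 4 * s * τ * Ys = 0 := by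
  have hsymm := jacobian_relation_of_symmetry hm h1 h2 h3 h4
  rw [eq_div_iff (pow_ne_zero 2 hm)] at h1 h2 h3 h4
  have hz' : (m ^ 2 - 4 * τ ^ 2) * a₁ + 4 * τ * (2 - m) * a₂ + 4 * (m - 1) * b₂ = 0 := by
    field_simp at hz
    linear_combination hz
  have hcramer : (m ^ 2 - 4 * τ ^ 2) * (2 * τ * Ys - Yτ) + 4 * τ * (2 - m) * (Xτ - 2 * τ * Xs)
      + 4 * (m - 1) * ((1 + s - τ ^ 2) * Xs + τ * Xτ) = 0 := by
    linear_combination ((Xs * Yτ - Xτ * Ys) * m ^ 2 / 2) * hz'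
      - (m ^ 2 - 4 * τ ^ 2) / 2 * (Yτ * h1 - Ys * h2)
      - 2 * τ * (2 - m) * (Xs * h2 - Xτ * h1) - 2 * (m - 1) * (Xs * h4 - Xτ * h3)
  refine mul_left_cancel₀ hm ?_
  rw [hms] at hcramer ⊢
  linear_combination -hcramer - 2 * τ * (s + τ ^ 2 - 1) * hsymm

end Jacobian

lemma hodographSystem_of_zmc {X Y : ℝ × ℝ → ℝ} (hX : DifferentiableAt ℝ X q)
    (hY : DifferentiableAt ℝ Y q) (hf : ContDiffAt ℝ 2 f (X q, Y q)) (hz : ZMCAt f (X q, Y q))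
    (hinv : ∀ᶠ x in 𝓝 q, 1 + pd1 f (X x, Y x) ≠ 0 ∧ hodo f (X x, Y x) = x) :
    HodographSystem (fun x => f (X x, Y x) + X x) X Y q := by
  have hX' := hasPartialsAt_pd hX
  have hY' := hasPartialsAt_pd hY
  have hfx : ∀ᶠ x in 𝓝 q, pd1 f (X x, Y x) = 2 / hodoDenom x - 1 :=
    hinv.mono fun x hx => by simpa only [hx.2] using pd1_eq_of_hodo hx.1
  have hfy : ∀ᶠ x in 𝓝 q, pd2 f (X x, Y x) = 2 * x.2 / hodoDenom x :=
    hinv.mono fun x hx => by simpa only [hx.2] using pd2_eq_of_hodo hx.1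
  have hm : hodoDenom q ≠ 0 := by
    simpa only [hinv.self_of_nhds.2] using hodoDenom_hodo_ne_zero hinv.self_of_nhds.1
  have hx := (hasPartialsAt_pd1 hf).comp hX' hY'
  have hx' := (hasPartialsAt_two_div_hodoDenom_sub_one hm).congr_of_eventuallyEq hfx
  have hy := (hasPartialsAt_pd2 hf).comp hX' hY'
  have hy' := (hasPartialsAt_two_mul_div_hodoDenom hm).congr_of_eventuallyEq hfy
  have h1 := hx.pd1_eq.symm.trans hx'.pd1_eq
  have h2 := hx.pd2_eq.symm.trans hx'.pd2_eq
  have h3 := hy.pd1_eq.symm.trans hy'.pd1_eq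
  have h4 := hy.pd2_eq.symm.trans hy'.pd2_eq
  have hsymm := jacobian_relation_of_symmetry hm h1 h2 h3 h4
  rw [ZMCAt, hfx.self_of_nhds, hfy.self_of_nhds] at hz
  have hzmc := jacobian_relation_of_zmc hm h1 h2 h3 h4 rfl hz
  have hZ : HasPartialsAt (fun x => f (X x, Y x) + X x)
      (2 / hodoDenom q * (pd1 X q + q.2 * pd1 Y q))
      (2 / hodoDenom q * (pd2 X q + q.2 * pd2 Y q)) q := by
    refine (((hasPartialsAt_pd (hf.differentiableAt two_ne_zero)).comp hX' hY').add
      hX').congr_partials ?_ ?_ <;>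
    · rw [hfx.self_of_nhds, hfy.self_of_nhds]
      ring
  rw [HodographSystem, hZ.pd1_eq, hZ.pd2_eq]
  refine ⟨hX'.congr_partials ?_ ?_, hY'.congr_partials ?_ ?_⟩ <;> field_simp <;> rw [hodoDenom]
  · linear_combination -q.2 * hsymm
  · linear_combination -q.2 * hzmc
  · linear_combination hsymm
  · linear_combination hzmc

lemma keldysh_of_hodo_inverse {K : ℝ × ℝ → ℝ × ℝ} (hK : ContDiffAt ℝ 2 K q)
    (hf : ContDiffAt ℝ 2 f (K q)) (hz : ∀ᶠ x in 𝓝 (K q), ZMCAt f x ∧ 1 + pd1 f x ≠ 0)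
    (hinv : ∀ᶠ x in 𝓝 q, hodo f (K x) = x) :
    keldysh (fun x => f (K x) + (K x).1) q = 0 ∧ keldysh (fun x => (K x).1) q = 0 ∧
      keldysh (fun x => (K x).2) q = 0 := by
  refine keldysh_of_hodographSystem ((hf.comp q hK).add hK.fst) hK.snd ?_
  have hfK := hK.continuousAt.eventually ((hf.eventually (by simp)).and hz)
  filter_upwards [hK.eventually (by simp), (hfK.and hinv).eventually_nhds] with x hKx hx
  exact hodographSystem_of_zmc (hKx.fst.differentiableAt two_ne_zero)
    (hKx.snd.differentiableAt two_ne_zero) hx.self_of_nhds.1.1 hx.self_of_nhds.1.2.1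
    (hx.mono fun y hy => ⟨hy.1.2.2, hy.2⟩)

lemma analyticAt_hodo_inverse {K : ℝ × ℝ → ℝ × ℝ} {τ : ℝ} (hK : ContDiffAt ℝ 2 K (0, τ))
    (hf : ContDiffAt ℝ 2 f (K (0, τ))) (hz : ∀ᶠ x in 𝓝 (K (0, τ)), ZMCAt f x ∧ 1 + pd1 f x ≠ 0)
    (hinv : ∀ᶠ x in 𝓝 (0, τ), hodo f (K x) = x) :
    AnalyticAt ℝ K (0, τ) ∧ AnalyticAt ℝ (f ∘ K) (0, τ) := by
  have hkel : ∀ᶠ x in 𝓝 (0, τ), ContDiffAt ℝ 2 K x ∧ ContDiffAt ℝ 2 f (K x) ∧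
      keldysh (fun x => f (K x) + (K x).1) x = 0 ∧ keldysh (fun x => (K x).1) x = 0 ∧
      keldysh (fun x => (K x).2) x = 0 := by
    filter_upwards [hK.eventually (by simp), hK.continuousAt.eventually (hf.eventually (by simp)),
      hK.continuousAt.eventually hz.eventually_nhds, hinv.eventually_nhds] with x hKx hfx hzx hx
    exact ⟨hKx, hfx, keldysh_of_hodo_inverse hKx hfx hzx hx⟩
  have hZ := analyticAt_of_keldysh <| hkel.mono fun x ⟨hKx, hfx, h, _, _⟩ =>
    ⟨(hfx.comp x hKx).add hKx.fst, h⟩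
  have hX := analyticAt_of_keldysh <| hkel.mono fun x ⟨hKx, _, _, h, _⟩ => ⟨hKx.fst, h⟩
  have hY := analyticAt_of_keldysh <| hkel.mono fun x ⟨hKx, _, _, _, h⟩ => ⟨hKx.snd, h⟩
  exact ⟨hX.prod hY, (hZ.sub hX).congr (.of_forall fun x => by simp)⟩

end Hodograph

/-! ### Non-degeneracy of the Hessian -/

section Hessian

variable {f : ℝ × ℝ → ℝ} {p : ℝ × ℝ}

lemma hasPartialsAt_Bfun (hf : ContDiffAt ℝ 2 f p) :
    HasPartialsAt (Bfun f) (-2 * (pd1 f p * pd1 (pd1 f) p + pd2 f p * pd2 (pd1 f) p))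
      (-2 * (pd1 f p * pd2 (pd1 f) p + pd2 f p * pd2 (pd2 f) p)) p :=
  (((HasPartialsAt.const 1).sub (hasPartialsAt_pd1 hf).sq).sub
    (hasPartialsAt_pd2 hf).sq).congr_partials (by ring) (by ring)

/- For `n = ∇f`, a unit vector at `p`, and the Hessian `H` one has `∇B = -2 H n`, while the equation
says `⟨H n, n⟩ = 0`. Hence `|H n|² = -det H` by the Cayley–Hamilton theorem. -/
lemma hessian_det_eq (hf : ContDiffAt ℝ 2 f p) (hz : ZMCAt f p) (hB : Bfun f p = 0) :
    4 * (pd1 (pd1 f) p * pd2 (pd2 f) p - pd2 (pd1 f) p ^ 2)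
      = -(pd1 (Bfun f) p ^ 2 + pd2 (Bfun f) p ^ 2) := by
  rw [(hasPartialsAt_Bfun hf).pd1_eq, (hasPartialsAt_Bfun hf).pd2_eq]
  rw [ZMCAt] at hz
  rw [Bfun] at hB
  linear_combination 4 * (pd1 (pd1 f) p + pd2 (pd2 f) p) * hz
    + 4 * (pd1 (pd1 f) p * pd2 (pd2 f) p - pd2 (pd1 f) p ^ 2
      - (pd1 (pd1 f) p + pd2 (pd2 f) p) ^ 2) * hB

lemma hessian_injective (hf : ContDiffAt ℝ 2 f p) (hz : ZMCAt f p) (hB : Bfun f p = 0)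
    (hgrad : (pd1 (Bfun f) p, pd2 (Bfun f) p) ≠ (0, 0)) {v : ℝ × ℝ}
    (hx : fderiv ℝ (pd1 f) p v = 0) (hy : fderiv ℝ (pd2 f) p v = 0) : v = 0 := by
  have hdet : pd1 (pd1 f) p * pd2 (pd2 f) p - pd2 (pd1 f) p ^ 2 ≠ 0 := by
    intro h
    have hsum := hessian_det_eq hf hz hB
    refine hgrad (Prod.ext ?_ ?_) <;> dsimp only <;> nlinarith
  rw [(hasPartialsAt_pd1 hf).fderiv] at hx
  rw [(hasPartialsAt_pd2 hf).fderiv] at hy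
  simp only [add_apply, smul_apply, ContinuousLinearMap.coe_fst', ContinuousLinearMap.coe_snd',
    smul_eq_mul] at hx hy
  ext
  · refine (mul_eq_zero_iff_left hdet).1 ?_
    linear_combination pd2 (pd2 f) p * hx - pd2 (pd1 f) p * hy
  · refine (mul_eq_zero_iff_left hdet).1 ?_
    linear_combination pd1 (pd1 f) p * hy - pd2 (pd1 f) p * hx

lemma hodo_fderiv_injective (hf : ContDiffAt ℝ 2 f p) (hz : ZMCAt f p) (hB : Bfun f p = 0)
    (hgrad : (pd1 (Bfun f) p, pd2 (Bfun f) p) ≠ (0, 0)) (hp : 1 + pd1 f p ≠ 0) :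
    Function.Injective (fderiv ℝ (hodo f) p) := by
  have hhodo := (contDiffAt_hodo (n := 1) hf hp).differentiableAt one_ne_zero
  have hnear := eventually_one_add_pd1_ne_zero (hf.of_le one_le_two) hp
  have hm := hodoDenom_hodo_ne_zero hp
  have hfx := (HasFDerivAt.comp p (hasPartialsAt_two_div_hodoDenom_sub_one hm)
    hhodo.hasFDerivAt).congr_of_eventuallyEq (hnear.mono fun q hq => pd1_eq_of_hodo hq)
  have hfy := (HasFDerivAt.comp p (hasPartialsAt_two_mul_div_hodoDenom hm)
    hhodo.hasFDerivAt).congr_of_eventuallyEq (hnear.mono fun q hq => pd2_eq_of_hodo hq)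
  refine (injective_iff_map_eq_zero _).2 fun v hv => hessian_injective hf hz hB hgrad ?_ ?_
  · rw [hfx.fderiv, ContinuousLinearMap.comp_apply, hv, map_zero]
  · rw [hfy.fderiv, ContinuousLinearMap.comp_apply, hv, map_zero]

end Hessian

/-! ### Local inverses -/

lemma exists_openPartialHomeomorph_of_injective_fderiv {𝕜 E : Type*} [RCLike 𝕜]
    [NormedAddCommGroup E] [NormedSpace 𝕜 E] [FiniteDimensional 𝕜 E] {φ : E → E} {a : E}
    {n : WithTop ℕ∞} (hφ : ContDiffAt 𝕜 n φ a) (hn : n ≠ 0)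
    (hinj : Function.Injective (fderiv 𝕜 φ a)) :
    ∃ (e : OpenPartialHomeomorph E E) (i : E ≃L[𝕜] E), ⇑e = φ ∧ a ∈ e.source ∧
      HasFDerivAt φ (i : E →L[𝕜] E) a := by
  have := FiniteDimensional.complete 𝕜 E
  let i : E ≃L[𝕜] E :=
    (LinearEquiv.ofInjectiveEndo (fderiv 𝕜 φ a : E →ₗ[𝕜] E) hinj).toContinuousLinearEquiv
  have hi : HasFDerivAt φ (i : E →L[𝕜] E) a :=
    (hφ.differentiableAt hn).hasFDerivAt.congr_fderiv (by ext; rfl)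
  exact ⟨hφ.toOpenPartialHomeomorph φ hi hn, i, rfl,
    hφ.mem_toOpenPartialHomeomorph_source hi hn, hi⟩

lemma analyticAt_of_comp_symm {𝕜 E F G : Type*} [NontriviallyNormedField 𝕜]
    [NormedAddCommGroup E] [NormedSpace 𝕜 E] [NormedAddCommGroup F] [NormedSpace 𝕜 F]
    [NormedAddCommGroup G] [NormedSpace 𝕜 G] {e : OpenPartialHomeomorph E G} {a : E}
    {i : E ≃L[𝕜] G} {f : E → F} (ha : a ∈ e.source) (hi : HasFDerivAt e (i : E →L[𝕜] G) a)
    (hsymm : AnalyticAt 𝕜 e.symm (e a)) (hf : AnalyticAt 𝕜 (f ∘ e.symm) (e a)) :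
    AnalyticAt 𝕜 f a := by
  have hderiv : HasFDerivAt e.symm (i.symm : G →L[𝕜] E) (e a) :=
    e.hasFDerivAt_symm (e.map_source ha) (by rwa [e.left_inv ha])
  have he : AnalyticAt 𝕜 e a := e.symm.analyticAt_symm (i := i.symm) ha hsymm hderiv.fderiv
  refine (hf.comp he).congr ?_
  filter_upwards [e.open_source.mem_nhds ha] with x hx
  simp [e.left_inv hx]

/-! ### Regularity at points of type change -/

section TypeChange

variable {f : ℝ × ℝ → ℝ} {p : ℝ × ℝ}

lemma analyticAt_of_typeChange_of_one_add_pd1_ne_zero (hf : ContDiffAt ℝ 3 f p)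
    (hz : ∀ᶠ q in 𝓝 p, ZMCAt f q) (hB : Bfun f p = 0)
    (hgrad : (pd1 (Bfun f) p, pd2 (Bfun f) p) ≠ (0, 0)) (hp : 1 + pd1 f p ≠ 0) :
    AnalyticAt ℝ f p := by
  have hf2 : ContDiffAt ℝ 2 f p := hf.of_le (by norm_num)
  have hhodo : ContDiffAt ℝ 2 (hodo f) p := contDiffAt_hodo (hf.of_le (by norm_num)) hp
  obtain ⟨e, i, he, hpe, hi⟩ := exists_openPartialHomeomorph_of_injective_fderiv hhodo two_ne_zero
    (hodo_fderiv_injective hf2 hz.self_of_nhds hB hgrad hp)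
  rw [← he] at hi hhodo
  have hbase : e p = (0, (e p).2) := Prod.ext (by simp [he, hodo, hB]) rfl
  have hleft : e.symm (e p) = p := e.left_inv hpe
  have hsymm : ContDiffAt ℝ 2 e.symm (e p) :=
    e.contDiffAt_symm (e.map_source hpe) (by rwa [hleft]) (by rwa [hleft])
  have hchart := eventually_one_add_pd1_ne_zero (hf.of_le (by norm_num)) hp
  have hinv : ∀ᶠ x in 𝓝 (e p), hodo f (e.symm x) = x :=
    he ▸ e.eventually_right_inverse (e.map_source hpe)
  have hK := analyticAt_hodo_inverse (f := f) (K := e.symm) (τ := (e p).2)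
  rw [← hbase, hleft] at hK
  exact analyticAt_of_comp_symm hpe hi (hK hsymm hf2 (hz.and hchart) hinv).1
    (hK hsymm hf2 (hz.and hchart) hinv).2

lemma Bfun_neg (f : ℝ × ℝ → ℝ) : Bfun (-f) = Bfun f := by
  funext q
  simp [Bfun, pd1_neg, pd2_neg]

lemma ZMCAt.neg (h : ZMCAt f p) : ZMCAt (-f) p := by
  rw [ZMCAt] at h ⊢
  simp only [pd1_neg, pd2_neg, Pi.neg_apply]
  linear_combination -h

theorem analyticAt_of_typeChange (hf : ContDiffAt ℝ 3 f p) (hz : ∀ᶠ q in 𝓝 p, ZMCAt f q)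
    (hB : Bfun f p = 0) (hgrad : (pd1 (Bfun f) p, pd2 (Bfun f) p) ≠ (0, 0)) :
    AnalyticAt ℝ f p := by
  by_cases hp : 1 + pd1 f p = 0
  · have hp' : 1 + pd1 (-f) p ≠ 0 := by
      rw [pd1_neg, Pi.neg_apply]
      linarith
    rw [← Bfun_neg] at hB hgrad
    have hneg : AnalyticAt ℝ (-f) p := analyticAt_of_typeChange_of_one_add_pd1_ne_zero hf.neg
      (hz.mono fun q hq => hq.neg) hB hgrad hp'
    simpa only [neg_neg] using hneg.neg
  · exact analyticAt_of_typeChange_of_one_add_pd1_ne_zero hf hz hB hgrad hp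

end TypeChange

theorem stmt18_general (Ω : Set (ℝ × ℝ)) (hΩ : IsOpen Ω) (f : ℝ × ℝ → ℝ)
    (hf : ContDiffOn ℝ 3 f Ω) (hzmc : ∀ q ∈ Ω, ZMCAt f q)
    (p : ℝ × ℝ) (hp : p ∈ Ω) (hB : Bfun f p = 0)
    (hgrad : (pd1 (Bfun f) p, pd2 (Bfun f) p) ≠ (0, 0)) :
    ∃ V : Set (ℝ × ℝ), IsOpen V ∧ p ∈ V ∧ V ⊆ Ω ∧ AnalyticOnNhd ℝ f V :=
  ⟨{q | AnalyticAt ℝ f q} ∩ Ω, (isOpen_analyticAt ℝ f).inter hΩ,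
    ⟨analyticAt_of_typeChange (hf.contDiffAt (hΩ.mem_nhds hp))
      ((hΩ.eventually_mem hp).mono hzmc) hB hgrad, hp⟩,
    inter_subset_right, fun _ hq => hq.1⟩

/-- regularity part of the fundamental theorem of type change, Gu, Klyachin:
    a C^∞ solution of the zero mean curvature equation is real analytic in a neighborhood
    of any non-degenerate point of type change. -/
theorem stmt18 (Ω : Set (ℝ × ℝ)) (hΩ : IsOpen Ω) (f : ℝ × ℝ → ℝ)
    (hf : ContDiffOn ℝ (⊤ : ℕ∞) f Ω) (hzmc : ∀ q ∈ Ω, ZMCAt f q)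
    (p : ℝ × ℝ) (hp : p ∈ Ω) (hB : Bfun f p = 0)
    (hgrad : (pd1 (Bfun f) p, pd2 (Bfun f) p) ≠ (0, 0)) :
    ∃ V : Set (ℝ × ℝ), IsOpen V ∧ p ∈ V ∧ V ⊆ Ω ∧ AnalyticOnNhd ℝ f V :=
  stmt18_general Ω hΩ f (hf.of_le (WithTop.coe_le_coe.2 (le_top : (3 : ℕ∞) ≤ ⊤))) hzmc p hp hB hgrad
end

section
/- Let σ : (a, b) → ℝ² be a real analytic curve parametrized by arc length (|σ'(t)| = 1) which is locally convex (σ''(t) ≠ 0 for all t). Then for every t₀ ∈ (a, b) there exist a neighborhood V ⊆ ℝ² of σ(t₀), δ > 0, and a real analytic function ψ : V → ℝ satisfying the zero mean curvature equation (1 − ψ_y²) ψ_xx + 2 ψ_x ψ_y ψ_xy + (1 − ψ_x²) ψ_yy = 0 on V, such that, with B := 1 − ψ_x² − ψ_y²: (i) ψ(σ(t)) = t for |t − t₀| < δ; (ii) B(σ(t)) = 0 and ∇B(σ(t)) ≠ 0 for |t − t₀| < δ; and (iii) for each such t there is s₀ > 0 with B(σ(t) + s σ''(t)) < 0 and B(σ(t)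 − s σ''(t)) > 0 for 0 < s < s₀. Interpreted as a stream function of the virtual gas with ρc = 1, ψ describes a flow that changes from subsonic (B > 0) to supersonic (B < 0) across σ, with the acceleration vector σ'' pointing into the supersonic region. -/
/-!
The midpoints of pairs of points of the null curve `t ↦ (t, σ t)` sweep out a surface of zero mean
curvature, the graph of a function `ψ` with `ψ ((σ α + σ β) / 2) = (α + β) / 2`. With `α = u + v`
and `β = u - v` the midpoint of `σ α` and `σ β` is even in `v`, so it is an analytic function of
`u` and `w = v²`, also for `w < 0`. This extension is obtained without complexifying, by evaluating
the power series of `σ` at a `2 × 2` matrix `u + N` with `N² = w`. Its differential at `w = 0` has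
columns `σ'` and `σ'' / 2`, independent because `σ' ⊥ σ'' ≠ 0`, and `ψ` is the `u`-component of its
local inverse.

Differentiating the midpoint identity gives `dψ (σ' α) = dψ (σ' β) = 1` and
`Hess ψ (σ' α, σ' β) = 0`, which for distinct unit vectors `σ' α`, `σ' β` is the zero mean
curvature equation. It thus holds on the side `w > 0`, and across the curve by analyticity. On the
diagonal `α = β` one finds `∇ψ = σ'` and `Hess ψ (σ', ·) = ⟨σ'', ·⟩`; hence `B = 0` on the curve
and `∇B · σ'' = -2 |σ''|² < 0`.
-/

open Set

open Filter Topology NNReal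

section AlgebraSeries

variable {𝕜 A E : Type*} [NontriviallyNormedField 𝕜] [NormedRing A] [NormedAlgebra 𝕜 A]
  [NormedAddCommGroup E] [NormedSpace 𝕜 E]

/-- The power series `∑ ℓ (aⁿ) • cₙ` in an element `a` of a normed algebra, where `cₙ` are the
coefficients of the power series `p` in one scalar variable. For `ℓ` a matrix entry it computes
that entry of `p` evaluated at a matrix. -/
noncomputable def algebraSeries (p : FormalMultilinearSeries 𝕜 𝕜 E) (ℓ : StrongDual 𝕜 A) :
    FormalMultilinearSeries 𝕜 A E := fun n =>
  (ℓ.smulRight (p.coeff n)).compContinuousMultilinearMap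
    (ContinuousMultilinearMap.mkPiAlgebraFin 𝕜 n A)

lemma algebraSeries_apply_const (p : FormalMultilinearSeries 𝕜 𝕜 E) (ℓ : StrongDual 𝕜 A) (n : ℕ)
    (a : A) : algebraSeries p ℓ n (fun _ => a) = ℓ (a ^ n) • p.coeff n := by
  simp [algebraSeries]

lemma norm_algebraSeries_le [NormOneClass A] (p : FormalMultilinearSeries 𝕜 𝕜 E)
    (ℓ : StrongDual 𝕜 A) (n : ℕ) : ‖algebraSeries p ℓ n‖ ≤ ‖ℓ‖ * ‖p n‖ := by
  refine (ContinuousLinearMap.norm_compContinuousMultilinearMap_le _ _).trans_eq ?_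
  rw [ContinuousMultilinearMap.norm_mkPiAlgebraFin, mul_one,
    ContinuousLinearMap.norm_smulRight_apply, p.norm_apply_eq_norm_coef]

lemma radius_le_radius_algebraSeries [NormOneClass A] (p : FormalMultilinearSeries 𝕜 𝕜 E)
    (ℓ : StrongDual 𝕜 A) : p.radius ≤ (algebraSeries p ℓ).radius := by
  refine ENNReal.le_of_forall_nnreal_lt fun r hr => ?_
  obtain ⟨C, -, hC⟩ := p.norm_mul_pow_le_of_lt_radius hr
  refine (algebraSeries p ℓ).le_radius_of_bound (‖ℓ‖ * C) fun n => ?_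
  calc ‖algebraSeries p ℓ n‖ * (r : ℝ) ^ n
      ≤ ‖ℓ‖ * ‖p n‖ * (r : ℝ) ^ n := by gcongr; exact norm_algebraSeries_le p ℓ n
    _ = ‖ℓ‖ * (‖p n‖ * (r : ℝ) ^ n) := mul_assoc _ _ _
    _ ≤ ‖ℓ‖ * C := by gcongr; exact hC n

end AlgebraSeries

/-- The endomorphism `u + N` of `ℝ²` with `N = [[0, w / ε], [ε, 0]]`, where `p = (u, w)`.
Since `N² = w`, it stands for `u + √w`, but it depends analytically on `w` and makes sense for
`w < 0`. The scaling `ε` makes its norm small near `p = 0`. -/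
noncomputable def sqrtOp (ε : ℝ) (p : ℝ × ℝ) : (ℝ × ℝ) →L[ℝ] (ℝ × ℝ) :=
  p.1 • ContinuousLinearMap.id ℝ (ℝ × ℝ)
    + (p.2 / ε) • (ContinuousLinearMap.inl ℝ ℝ ℝ).comp (ContinuousLinearMap.snd ℝ ℝ ℝ)
    + ε • (ContinuousLinearMap.inr ℝ ℝ ℝ).comp (ContinuousLinearMap.fst ℝ ℝ ℝ)

lemma sqrtOp_apply (ε : ℝ) (p x : ℝ × ℝ) :
    sqrtOp ε p x = (p.1 * x.1 + p.2 / ε * x.2, p.1 * x.2 + ε * x.1) := by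
  ext <;> simp [sqrtOp]

lemma analyticAt_sqrtOp (ε : ℝ) (p : ℝ × ℝ) : AnalyticAt ℝ (sqrtOp ε) p := by
  have h_fst : AnalyticAt ℝ (fun q : ℝ × ℝ => q.1) p := analyticAt_fst
  have h_snd : AnalyticAt ℝ (fun q : ℝ × ℝ => q.2) p := analyticAt_snd
  exact ((h_fst.smul analyticAt_const).add (h_snd.div_const.smul analyticAt_const)).add
    analyticAt_const

lemma nnnorm_sqrtOp_zero_le (ε : ℝ≥0) : ‖sqrtOp ε 0‖₊ ≤ ε := by
  refine ContinuousLinearMap.opNorm_le_bound _ ε.coe_nonneg fun x => ?_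
  have h_fst : ε * ‖x.1‖ ≤ ε * ‖x‖ := by gcongr; exact norm_fst_le x
  simp only [sqrtOp_apply, Prod.fst_zero, Prod.snd_zero, zero_mul, zero_div, zero_add,
    Prod.norm_mk, norm_zero, norm_mul, Real.norm_of_nonneg ε.coe_nonneg]
  exact max_le (h_fst.trans' (by positivity)) h_fst

lemma clm_pow_apply_of_apply_eq_smul {R M : Type*} [CommSemiring R] [TopologicalSpace M]
    [AddCommMonoid M] [Module R M] {f : M →L[R] M} {μ : R} {x : M} (h : f x = μ • x) (n : ℕ) :
    (f ^ n) x = μ ^ n • x := by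
  induction n with
  | zero => simp
  | succ n ih => rw [pow_succ, mul_apply_eq_comp, h, map_smul, ih, smul_smul, pow_succ']

/-- `(v, ε)` and `(-v, ε)` are eigenvectors for `u + v` and `u - v`, with sum `2 • (0, ε)`. -/
lemma sqrtOp_pow_apply_snd {ε : ℝ} (hε : ε ≠ 0) (u v : ℝ) (n : ℕ) :
    ((sqrtOp ε (u, v ^ 2) ^ n) (0, 1)).2 = ((u + v) ^ n + (u - v) ^ n) / 2 := by
  have h_add : sqrtOp ε (u, v ^ 2) (v, ε) = (u + v) • (v, ε) := by
    rw [sqrtOp_apply]; ext <;> simp <;> field_simp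
  have h_sub : sqrtOp ε (u, v ^ 2) (-v, ε) = (u - v) • (-v, ε) := by
    rw [sqrtOp_apply]; ext <;> simp <;> field_simp <;> ring
  have h_split : ((0, 1) : ℝ × ℝ) = (2 * ε)⁻¹ • ((v, ε) + (-v, ε)) := by
    ext
    · simp
    · simp
      field_simp
      norm_num
  rw [h_split, map_smul, map_add, clm_pow_apply_of_apply_eq_smul h_add,
    clm_pow_apply_of_apply_eq_smul h_sub]
  simp only [Prod.smul_snd, Prod.snd_add, smul_eq_mul]
  field_simp

/-- The lower right entry of a `2 × 2` matrix; for a power series evaluated at `sqrtOp ε (u, v ^ 2)`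
it reads off the part that is even in `v`. -/
noncomputable def sndEntry : StrongDual ℝ ((ℝ × ℝ) →L[ℝ] (ℝ × ℝ)) :=
  (ContinuousLinearMap.snd ℝ ℝ ℝ).comp (ContinuousLinearMap.apply ℝ (ℝ × ℝ) ((0, 1) : ℝ × ℝ))

section EvenPart

variable {E : Type*} [NormedAddCommGroup E] [NormedSpace ℝ E]

lemma algebraSeries_sqrtOp (p : FormalMultilinearSeries ℝ ℝ E) {ε : ℝ} (hε : ε ≠ 0) (u v : ℝ)
    (n : ℕ) : algebraSeries p sndEntry n (fun _ => sqrtOp ε (u, v ^ 2)) =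
      midpoint ℝ (p n fun _ => u + v) (p n fun _ => u - v) := by
  have h_entry : sndEntry (sqrtOp ε (u, v ^ 2) ^ n) = ((u + v) ^ n + (u - v) ^ n) / 2 :=
    sqrtOp_pow_apply_snd hε u v n
  rw [algebraSeries_apply_const, h_entry, p.apply_eq_pow_smul_coeff, p.apply_eq_pow_smul_coeff,
    midpoint_eq_smul_add, ← add_smul, smul_smul, invOf_eq_inv, inv_mul_eq_div]

lemma hasSum_midpoint {ι : Type*} {f g : ι → E} {x y : E} (hf : HasSum f x) (hg : HasSum g y) :
    HasSum (fun i => midpoint ℝ (f i) (g i)) (midpoint ℝ x y) := by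
  simp only [midpoint_eq_smul_add]
  exact (hf.add hg).const_smul _

lemma exists_analyticAt_sq_eq_midpoint [CompleteSpace E] {f : ℝ → E} {t₀ : ℝ}
    (hf : AnalyticAt ℝ f t₀) :
    ∃ Φ : ℝ × ℝ → E, AnalyticAt ℝ Φ (t₀, 0) ∧ ∀ᶠ p : ℝ × ℝ in 𝓝 (t₀, 0),
      Φ (p.1, p.2 ^ 2) = midpoint ℝ (f (p.1 + p.2)) (f (p.1 - p.2)) := by
  obtain ⟨p, hp⟩ := hf
  set P := algebraSeries p sndEntry
  have h_radius : 0 < P.radius := hp.radius_pos.trans_le (radius_le_radius_algebraSeries p _)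
  obtain ⟨ε, hε, hεP⟩ := ENNReal.lt_iff_exists_nnreal_btwn.1 h_radius
  rw [ENNReal.coe_pos] at hε
  have hP := P.hasFPowerSeriesOnBall h_radius
  let N : ℝ × ℝ → (ℝ × ℝ) →L[ℝ] (ℝ × ℝ) := fun q => sqrtOp ε (q - (t₀, 0))
  have hN : AnalyticAt ℝ N (t₀, 0) :=
    (analyticAt_sqrtOp _ _).comp (f := fun q : ℝ × ℝ => q - (t₀, 0)) (by fun_prop)
  have hN_mem : N (t₀, 0) ∈ Metric.eball 0 P.radius := by
    rw [Metric.mem_eball, edist_zero_right]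
    refine (enorm_le_coe.2 ?_).trans_lt hεP
    simpa only [N, sub_self] using nnnorm_sqrtOp_zero_le ε
  refine ⟨P.sum ∘ N, (hP.analyticAt_of_mem hN_mem).comp hN, ?_⟩
  have h_sq : Tendsto (fun q : ℝ × ℝ => (q.1, q.2 ^ 2)) (𝓝 (t₀, 0)) (𝓝 (t₀, 0)) :=
    Continuous.tendsto' (by fun_prop) _ _ (by simp)
  have h_add : Tendsto (fun q : ℝ × ℝ => q.1 + q.2) (𝓝 (t₀, 0)) (𝓝 t₀) :=
    Continuous.tendsto' (by fun_prop) _ _ (by simp)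
  have h_sub : Tendsto (fun q : ℝ × ℝ => q.1 - q.2) (𝓝 (t₀, 0)) (𝓝 t₀) :=
    Continuous.tendsto' (by fun_prop) _ _ (by simp)
  filter_upwards [h_sq (hN.continuousAt (Metric.isOpen_eball.mem_nhds hN_mem)),
    h_add.eventually hp.eventually_hasSum_sub,
    h_sub.eventually hp.eventually_hasSum_sub] with q hq hq_add hq_sub
  have h_coeff (n : ℕ) : P n (fun _ => N (q.1, q.2 ^ 2)) =
      midpoint ℝ (p n fun _ => q.1 + q.2 - t₀) (p n fun _ => q.1 - q.2 - t₀) := by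
    simpa only [N, P, Prod.mk_sub_mk, sub_zero, add_sub_right_comm, sub_right_comm] using
      algebraSeries_sqrtOp p (NNReal.coe_ne_zero.2 hε.ne') (q.1 - t₀) q.2 n
  have h_sum := hP.hasSum hq
  simp only [zero_add, h_coeff] at h_sum
  exact h_sum.unique (hasSum_midpoint hq_add hq_sub)

end EvenPart

section DerivativesAtZero

variable {E : Type*} [NormedAddCommGroup E] [NormedSpace ℝ E] [CompleteSpace E]

lemma deriv_deriv_comp_sq {h : ℝ → E} (hh : AnalyticAt ℝ h 0) :
    deriv (deriv fun v => h (v ^ 2)) 0 = (2 : ℝ) • deriv h 0 := by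
  have h_sq : Tendsto (fun v : ℝ => v ^ 2) (𝓝 0) (𝓝 0) :=
    Continuous.tendsto' (by fun_prop) _ _ (by simp)
  have h_first : (deriv fun v => h (v ^ 2)) =ᶠ[𝓝 0] fun v => (2 * v) • deriv h (v ^ 2) := by
    filter_upwards [h_sq.eventually hh.eventually_analyticAt] with v hv
    have h_pow : HasDerivAt (fun v : ℝ => v ^ 2) (2 * v) v := by simpa using hasDerivAt_pow 2 v
    exact (hv.differentiableAt.hasDerivAt.scomp_of_eq v h_pow rfl).deriv
  have h_deriv : DifferentiableAt ℝ (fun v => deriv h (v ^ 2)) 0 :=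
    DifferentiableAt.comp (g := deriv h) 0 (by simpa using hh.deriv.differentiableAt) (by fun_prop)
  rw [h_first.deriv_eq,
    (((hasDerivAt_id' (0 : ℝ)).const_mul 2).fun_smul h_deriv.hasDerivAt).deriv]
  simp

lemma deriv_deriv_midpoint_add_sub {f : ℝ → E} {t : ℝ} (hf : AnalyticAt ℝ f t) :
    deriv (deriv fun v => midpoint ℝ (f (t + v)) (f (t - v))) 0 = deriv (deriv f) t := by
  have h_add : Tendsto (fun v => t + v) (𝓝 0) (𝓝 t) :=
    Continuous.tendsto' (by fun_prop) _ _ (by simp)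
  have h_sub : Tendsto (fun v => t - v) (𝓝 0) (𝓝 t) :=
    Continuous.tendsto' (by fun_prop) _ _ (by simp)
  have h_first : (deriv fun v => midpoint ℝ (f (t + v)) (f (t - v))) =ᶠ[𝓝 0]
      fun v => (⅟2 : ℝ) • (deriv f (t + v) - deriv f (t - v)) := by
    filter_upwards [h_add.eventually hf.eventually_analyticAt,
      h_sub.eventually hf.eventually_analyticAt] with v hv_add hv_sub
    simp only [midpoint_eq_smul_add, sub_eq_add_neg (deriv f _)]
    exact (((hv_add.differentiableAt.hasDerivAt.comp_const_add t v).add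
      (hv_sub.differentiableAt.hasDerivAt.comp_const_sub t v)).const_smul _).deriv
  have h_second : HasDerivAt (deriv f) (deriv (deriv f) t) t := hf.deriv.differentiableAt.hasDerivAt
  rw [h_first.deriv_eq, (((HasDerivAt.comp_const_add t 0 (by rwa [add_zero])).fun_sub
    (HasDerivAt.comp_const_sub t 0 (by rwa [sub_zero]))).fun_const_smul _).deriv,
    sub_neg_eq_add, ← midpoint_eq_smul_add, midpoint_self]

end DerivativesAtZero

lemma exists_openPartialHomeomorph_analyticAt_symm {E : Type*} [NormedAddCommGroup E]
    [NormedSpace ℝ E] [FiniteDimensional ℝ E] {f : E → E} {x : E} (hf : AnalyticAt ℝ f x)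
    (h_inj : Function.Injective (fderiv ℝ f x)) :
    ∃ e : OpenPartialHomeomorph E E, x ∈ e.source ∧ ⇑e = f ∧ AnalyticAt ℝ e.symm (f x) := by
  have := FiniteDimensional.complete ℝ E
  let f' : E ≃L[ℝ] E :=
    (LinearEquiv.ofInjectiveEndo (fderiv ℝ f x).toLinearMap h_inj).toContinuousLinearEquiv
  have hf' : (f' : E →L[ℝ] E) = fderiv ℝ f x := rfl
  have h_strict : HasStrictFDerivAt f (f' : E →L[ℝ] E) x := hf' ▸ hf.hasStrictFDerivAt
  have hx := h_strict.mem_toOpenPartialHomeomorph_source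
  exact ⟨h_strict.toOpenPartialHomeomorph f, hx, rfl,
    OpenPartialHomeomorph.analyticAt_symm' _ hx hf hf'.symm⟩

lemma eventually_eq_zero_of_nhdsWithin {E F : Type*} [NormedAddCommGroup E]
    [NormedSpace ℝ E] [NormedAddCommGroup F] [NormedSpace ℝ F] [CompleteSpace F]
    {f : E → F} {x : E} {s : Set E} (hf : AnalyticAt ℝ f x)
    (hs : IsOpen s) (hx : x ∈ closure s)
    (h : ∀ᶠ y in 𝓝[s] x, f y = 0) : ∀ᶠ y in 𝓝 x, f y = 0 := by
  obtain ⟨r, hr, h_ball⟩ := Metric.eventually_nhds_iff_ball.1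
    (hf.eventually_analyticAt.and (eventually_nhdsWithin_iff.1 h))
  obtain ⟨y, hy_ball, hys⟩ := mem_closure_iff.1 hx _ Metric.isOpen_ball (Metric.mem_ball_self hr)
  have hy : f =ᶠ[𝓝 y] 0 := by
    filter_upwards [(Metric.isOpen_ball.inter hs).mem_nhds ⟨hy_ball, hys⟩] with z hz
    exact (h_ball z hz.1).2 hz.2
  filter_upwards [Metric.ball_mem_nhds x hr] with z hz
  exact AnalyticOnNhd.eqOn_zero_of_preconnected_of_eventuallyEq_zero
    (fun w hw => (h_ball w hw).1) (convex_ball x r).isPreconnected hy_ball hy hz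

section Chord

variable {E : Type*} [NormedAddCommGroup E] [NormedSpace ℝ E]

/-- The midpoint of the chord joining the points `σ p.1` and `σ p.2` of a curve; as `p` varies it
sweeps out the projection of the surface of zero mean curvature. -/
noncomputable def chordMidpoint (σ : ℝ → E) (p : ℝ × ℝ) : E := midpoint ℝ (σ p.1) (σ p.2)

lemma chordMidpoint_self (σ : ℝ → E) (t : ℝ) : chordMidpoint σ (t, t) = σ t :=
  midpoint_self ℝ _

lemma chordMidpoint_comm (σ : ℝ → E) (α β : ℝ) :
    chordMidpoint σ (α, β) = chordMidpoint σ (β, α) :=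
  midpoint_comm _ _

/-- A local diffeomorphism `e` near `(t₀, 0)` that folds the chord midpoints of `σ` along the
curve: `e (u, v²)` is the midpoint of the chord from `σ (u + v)` to `σ (u - v)`. -/
structure IsFoldChart (σ : ℝ → E) (t₀ : ℝ) (e : OpenPartialHomeomorph (ℝ × ℝ) E) : Prop where
  mem_source : (t₀, 0) ∈ e.source
  analyticAt : AnalyticAt ℝ e (t₀, 0)
  analyticAt_symm : AnalyticAt ℝ e.symm (σ t₀)
  eventually_apply_sq : ∀ᶠ p : ℝ × ℝ in 𝓝 (t₀, 0),
    e (p.1, p.2 ^ 2) = chordMidpoint σ (p.1 + p.2, p.1 - p.2)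

lemma fderiv_inl_of_apply_sq_eq_chordMidpoint {σ : ℝ → E} {t₀ : ℝ} (hσ : AnalyticAt ℝ σ t₀)
    {Φ : ℝ × ℝ → E} (hΦ : AnalyticAt ℝ Φ (t₀, 0))
    (h : ∀ᶠ p : ℝ × ℝ in 𝓝 (t₀, 0), Φ (p.1, p.2 ^ 2) = chordMidpoint σ (p.1 + p.2, p.1 - p.2)) :
    fderiv ℝ Φ (t₀, 0) (1, 0) = deriv σ t₀ := by
  have h_line : HasDerivAt (fun u : ℝ => (u, (0 : ℝ))) (1, 0) t₀ :=
    (hasDerivAt_id t₀).prodMk (hasDerivAt_const _ _)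
  have h_eq : (fun u => Φ (u, 0)) =ᶠ[𝓝 t₀] σ := by
    filter_upwards [h_line.continuousAt.eventually h] with u hu
    simpa [chordMidpoint_self] using hu
  exact (hΦ.differentiableAt.hasFDerivAt.comp_hasDerivAt t₀ h_line).unique
    (hσ.differentiableAt.hasDerivAt.congr_of_eventuallyEq h_eq)

lemma two_smul_fderiv_inr_of_apply_sq_eq_chordMidpoint [CompleteSpace E] {σ : ℝ → E} {t₀ : ℝ}
    (hσ : AnalyticAt ℝ σ t₀) {Φ : ℝ × ℝ → E} (hΦ : AnalyticAt ℝ Φ (t₀, 0))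
    (h : ∀ᶠ p : ℝ × ℝ in 𝓝 (t₀, 0), Φ (p.1, p.2 ^ 2) = chordMidpoint σ (p.1 + p.2, p.1 - p.2)) :
    (2 : ℝ) • fderiv ℝ Φ (t₀, 0) (0, 1) = deriv (deriv σ) t₀ := by
  have h_line : HasDerivAt (fun w : ℝ => (t₀, w)) (0, 1) 0 :=
    (hasDerivAt_const _ _).prodMk (hasDerivAt_id _)
  have h_analytic : AnalyticAt ℝ (fun w => Φ (t₀, w)) 0 :=
    hΦ.comp (f := fun w : ℝ => (t₀, w)) (analyticAt_const.prod analyticAt_id)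
  have h_eq : (fun v => Φ (t₀, v ^ 2)) =ᶠ[𝓝 0] fun v => midpoint ℝ (σ (t₀ + v)) (σ (t₀ - v)) :=
    h_line.continuousAt.eventually h
  rw [← (hΦ.differentiableAt.hasFDerivAt.comp_hasDerivAt 0 h_line).deriv,
    ← deriv_deriv_midpoint_add_sub hσ, ← h_eq.deriv.deriv_eq]
  exact (deriv_deriv_comp_sq h_analytic).symm

lemma IsFoldChart.apply_eq {σ : ℝ → E} {t₀ : ℝ} {e : OpenPartialHomeomorph (ℝ × ℝ) E}
    (he : IsFoldChart σ t₀ e) : e (t₀, 0) = σ t₀ := by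
  simpa [chordMidpoint_self] using he.eventually_apply_sq.self_of_nhds

lemma IsFoldChart.tendsto_symm {σ : ℝ → E} {t₀ : ℝ} {e : OpenPartialHomeomorph (ℝ × ℝ) E}
    (he : IsFoldChart σ t₀ e) : Tendsto e.symm (𝓝 (σ t₀)) (𝓝 (t₀, 0)) :=
  he.apply_eq ▸ e.tendsto_symm he.mem_source

lemma IsFoldChart.eventually_symm_chordMidpoint_fst {σ : ℝ → E} {t₀ : ℝ}
    {e : OpenPartialHomeomorph (ℝ × ℝ) E} (he : IsFoldChart σ t₀ e) :
    ∀ᶠ p : ℝ × ℝ in 𝓝 (t₀, t₀), (e.symm (chordMidpoint σ p)).1 = (p.1 + p.2) / 2 := by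
  have h_uv : Tendsto (fun p : ℝ × ℝ => ((p.1 + p.2) / 2, (p.1 - p.2) / 2))
      (𝓝 (t₀, t₀)) (𝓝 (t₀, 0)) := Continuous.tendsto' (by fun_prop) _ _ (by simp)
  have h_uw : Tendsto (fun p : ℝ × ℝ => ((p.1 + p.2) / 2, ((p.1 - p.2) / 2) ^ 2))
      (𝓝 (t₀, t₀)) (𝓝 (t₀, 0)) := Continuous.tendsto' (by fun_prop) _ _ (by simp)
  filter_upwards [h_uv.eventually he.eventually_apply_sq,
    h_uw.eventually (e.open_source.mem_nhds he.mem_source)] with p hp hp_source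
  have h_fst : (p.1 + p.2) / 2 + (p.1 - p.2) / 2 = p.1 := by ring
  have h_snd : (p.1 + p.2) / 2 - (p.1 - p.2) / 2 = p.2 := by ring
  simp only [h_fst, h_snd] at hp
  rw [← hp, e.left_inv hp_source]

/-- In a fold chart the chords fill only the half `0 < w`; analyticity crosses the curve `w = 0`. -/
lemma IsFoldChart.eventually_eq_zero {F : Type*} [NormedAddCommGroup F] [NormedSpace ℝ F]
    [CompleteSpace F] {σ : ℝ → E} {t₀ : ℝ} {e : OpenPartialHomeomorph (ℝ × ℝ) E}
    (he : IsFoldChart σ t₀ e) {G : E → F} (hG : AnalyticAt ℝ G (σ t₀))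
    (h : ∀ᶠ p : ℝ × ℝ in 𝓝 (t₀, t₀), p.1 ≠ p.2 → G (chordMidpoint σ p) = 0) :
    ∀ᶠ q in 𝓝 (σ t₀), G q = 0 := by
  have h_uv : Tendsto (fun x : ℝ × ℝ => (x.1, √x.2)) (𝓝 (t₀, 0)) (𝓝 (t₀, 0)) :=
    Continuous.tendsto' (by fun_prop) _ _ (by simp)
  have h_endpoints : Tendsto (fun x : ℝ × ℝ => (x.1 + √x.2, x.1 - √x.2))
      (𝓝 (t₀, 0)) (𝓝 (t₀, t₀)) := Continuous.tendsto' (by fun_prop) _ _ (by simp)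
  have h_half : ∀ᶠ x in 𝓝[{x : ℝ × ℝ | 0 < x.2}] (t₀, 0), G (e x) = 0 := by
    rw [eventually_nhdsWithin_iff]
    filter_upwards [h_uv.eventually he.eventually_apply_sq, h_endpoints.eventually h]
      with ⟨u, w⟩ h_chord h_zero (hw : 0 < w)
    simp only [Real.sq_sqrt hw.le] at h_chord
    rw [h_chord]
    refine h_zero fun h_eq => ?_
    linarith [Real.sqrt_pos.2 hw]
  have h_prod : {x : ℝ × ℝ | 0 < x.2} = univ ×ˢ Ioi 0 := univ_prod.symm
  have h_closure : (t₀, (0 : ℝ)) ∈ closure {x : ℝ × ℝ | 0 < x.2} := by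
    rw [h_prod, closure_prod_eq, closure_univ, closure_Ioi]
    exact ⟨mem_univ _, self_mem_Ici⟩
  have h_chart : ∀ᶠ x in 𝓝 (t₀, 0), G (e x) = 0 :=
    eventually_eq_zero_of_nhdsWithin (hG.comp_of_eq he.analyticAt he.apply_eq)
      (isOpen_lt continuous_const continuous_snd) h_closure h_half
  filter_upwards [he.tendsto_symm.eventually h_chart,
    e.open_target.mem_nhds (he.apply_eq ▸ e.map_source he.mem_source)] with q hq hq_target
  rwa [e.right_inv hq_target] at hq

lemma IsFoldChart.analyticAt_symm_fst {σ : ℝ → E} {t₀ : ℝ} {e : OpenPartialHomeomorph (ℝ × ℝ) E}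
    (he : IsFoldChart σ t₀ e) : AnalyticAt ℝ (fun q => (e.symm q).1) (σ t₀) :=
  analyticAt_fst.comp he.analyticAt_symm

end Chord

lemma exists_isFoldChart {σ : ℝ → ℝ × ℝ} {t₀ : ℝ} (hσ : AnalyticAt ℝ σ t₀)
    (h_indep : LinearIndependent ℝ ![deriv σ t₀, deriv (deriv σ) t₀]) :
    ∃ e, IsFoldChart σ t₀ e := by
  obtain ⟨Φ, hΦ, hΦ_sq⟩ := exists_analyticAt_sq_eq_midpoint hσ
  have h_inl := fderiv_inl_of_apply_sq_eq_chordMidpoint hσ hΦ hΦ_sq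
  have h_inr := two_smul_fderiv_inr_of_apply_sq_eq_chordMidpoint hσ hΦ hΦ_sq
  have h_inj : Function.Injective (fderiv ℝ Φ (t₀, 0)) := by
    rw [injective_iff_map_eq_zero]
    rintro ⟨x, y⟩ hxy
    have h_comb : x • deriv σ t₀ + (y / 2) • deriv (deriv σ) t₀ = 0 := by
      rw [← h_inl, ← h_inr, smul_smul, div_mul_cancel₀ y two_ne_zero, ← map_smul, ← map_smul,
        ← map_add, ← hxy]
      simp
    obtain ⟨hx, hy⟩ := LinearIndependent.pair_iff.1 h_indep _ _ h_comb
    simpa [hx] using hy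
  obtain ⟨e, he_source, he, he_symm⟩ := exists_openPartialHomeomorph_analyticAt_symm hΦ h_inj
  have hΦ_base : Φ (t₀, 0) = σ t₀ := by simpa [chordMidpoint_self] using hΦ_sq.self_of_nhds
  exact ⟨e, he_source, he ▸ hΦ, hΦ_base ▸ he_symm, he ▸ hΦ_sq⟩

section SecondDerivative

variable {E F : Type*} [NormedAddCommGroup E] [NormedSpace ℝ E] [NormedAddCommGroup F]
  [NormedSpace ℝ F] [CompleteSpace F] {ψ : E → F}

lemma hasDerivAt_fderiv_comp_apply {c w : ℝ → E} {c' w' : E} {t : ℝ}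
    (hψ : AnalyticAt ℝ ψ (c t)) (hc : HasDerivAt c c' t) (hw : HasDerivAt w w' t) :
    HasDerivAt (fun s => fderiv ℝ ψ (c s) (w s))
      (fderiv ℝ (fderiv ℝ ψ) (c t) c' (w t) + fderiv ℝ ψ (c t) w') t :=
  (hψ.fderiv.differentiableAt.hasFDerivAt.comp_hasDerivAt t hc).clm_apply hw

lemma fderiv_fderiv_comm {q : E} (hψ : AnalyticAt ℝ ψ q) (v w : E) :
    fderiv ℝ (fderiv ℝ ψ) q v w = fderiv ℝ (fderiv ℝ ψ) q w v :=
  (ContDiffAt.isSymmSndFDerivAt_of_omega hψ.contDiffAt).eq v w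

lemma hasFDerivAt_fderiv_apply {q : E} (hψ : AnalyticAt ℝ ψ q) (v : E) :
    HasFDerivAt (fun x => fderiv ℝ ψ x v) (fderiv ℝ (fderiv ℝ ψ) q v) q := by
  have h_flip : (fderiv ℝ (fderiv ℝ ψ) q).flip v = fderiv ℝ (fderiv ℝ ψ) q v := by
    ext w
    exact fderiv_fderiv_comm hψ w v
  simpa [h_flip] using
    hψ.fderiv.differentiableAt.hasFDerivAt.clm_apply (hasFDerivAt_const v q)

lemma analyticAt_fderiv_apply {q : E} (hψ : AnalyticAt ℝ ψ q) (v : E) :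
    AnalyticAt ℝ (fun x => fderiv ℝ ψ x v) q :=
  ((ContinuousLinearMap.apply ℝ F v).analyticAt _).comp hψ.fderiv

end SecondDerivative

section ChordStream

variable {E : Type*} [NormedAddCommGroup E] [NormedSpace ℝ E] {σ : ℝ → E} {ψ : E → ℝ}

lemma continuousAt_chordMidpoint {p : ℝ × ℝ} (h_fst : ContinuousAt σ p.1)
    (h_snd : ContinuousAt σ p.2) : ContinuousAt (chordMidpoint σ) p :=
  (h_fst.tendsto.comp continuousAt_fst).midpoint (h_snd.tendsto.comp continuousAt_snd)

lemma hasDerivAt_chordMidpoint_fst {α : ℝ} {σ' : E} (hσ : HasDerivAt σ σ' α) (β : ℝ) :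
    HasDerivAt (fun x => chordMidpoint σ (x, β)) ((⅟2 : ℝ) • σ') α := by
  simp only [chordMidpoint, midpoint_eq_smul_add]
  exact (hσ.add_const (σ β)).const_smul _

/-- Near `p`, the function `ψ` takes at the midpoint of a chord of `σ` the mean of the parameters
of its endpoints: the midpoints of the null curve `t ↦ (t, σ t)` lie on the graph of `ψ`. -/
structure ChordStreamAt (σ : ℝ → E) (ψ : E → ℝ) (p : ℝ × ℝ) : Prop where
  analyticAt_fst : AnalyticAt ℝ σ p.1
  analyticAt_snd : AnalyticAt ℝ σ p.2
  analyticAt_chordMidpoint : AnalyticAt ℝ ψ (chordMidpoint σ p)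
  eventually_apply_eq : ∀ᶠ x in 𝓝 p, ψ (chordMidpoint σ x) = (x.1 + x.2) / 2

namespace ChordStreamAt

variable {p : ℝ × ℝ} {α β t : ℝ}

lemma eventually [CompleteSpace E] (h : ChordStreamAt σ ψ p) :
    ∀ᶠ x in 𝓝 p, ChordStreamAt σ ψ x := by
  filter_upwards [continuousAt_fst.eventually h.analyticAt_fst.eventually_analyticAt,
    continuousAt_snd.eventually h.analyticAt_snd.eventually_analyticAt,
    (continuousAt_chordMidpoint h.analyticAt_fst.continuousAt
      h.analyticAt_snd.continuousAt).eventually h.analyticAt_chordMidpoint.eventually_analyticAt,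
    h.eventually_apply_eq.eventually_nhds] with x h_fst h_snd h_mid h_eq
  exact ⟨h_fst, h_snd, h_mid, h_eq⟩

lemma eventually_left [CompleteSpace E] (h : ChordStreamAt σ ψ (α, β)) :
    ∀ᶠ x in 𝓝 α, ChordStreamAt σ ψ (x, β) :=
  (Continuous.prodMk_left β).continuousAt.eventually h.eventually

lemma eventually_diag [CompleteSpace E] (h : ChordStreamAt σ ψ (t, t)) :
    ∀ᶠ x in 𝓝 t, ChordStreamAt σ ψ (x, x) :=
  (continuous_id.prodMk continuous_id).continuousAt.eventually h.eventually

lemma swap (h : ChordStreamAt σ ψ (α, β)) : ChordStreamAt σ ψ (β, α) where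
  analyticAt_fst := h.analyticAt_snd
  analyticAt_snd := h.analyticAt_fst
  analyticAt_chordMidpoint := chordMidpoint_comm σ α β ▸ h.analyticAt_chordMidpoint
  eventually_apply_eq := by
    filter_upwards [continuous_swap.continuousAt.eventually h.eventually_apply_eq] with x hx
    rwa [Prod.swap, chordMidpoint_comm, add_comm] at hx

lemma apply_self (h : ChordStreamAt σ ψ (t, t)) : ψ (σ t) = t := by
  simpa [chordMidpoint_self] using h.eventually_apply_eq.self_of_nhds

lemma analyticAt_self (h : ChordStreamAt σ ψ (t, t)) : AnalyticAt ℝ ψ (σ t) := by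
  simpa only [chordMidpoint_self] using h.analyticAt_chordMidpoint

lemma fderiv_deriv_left (h : ChordStreamAt σ ψ (α, β)) :
    fderiv ℝ ψ (chordMidpoint σ (α, β)) (deriv σ α) = 1 := by
  have h_chain := h.analyticAt_chordMidpoint.differentiableAt.hasFDerivAt.comp_hasDerivAt α
    (hasDerivAt_chordMidpoint_fst h.analyticAt_fst.differentiableAt.hasDerivAt β)
  have h_mean : HasDerivAt (fun x => ψ (chordMidpoint σ (x, β))) (1 / 2) α :=
    (((hasDerivAt_id α).add_const β).div_const 2).congr_of_eventuallyEq
      ((Continuous.prodMk_left β).continuousAt.eventually h.eventually_apply_eq)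
  have h_eq := h_chain.unique h_mean
  rw [map_smul, smul_eq_mul, invOf_eq_inv] at h_eq
  linarith

lemma fderiv_deriv_right (h : ChordStreamAt σ ψ (α, β)) :
    fderiv ℝ ψ (chordMidpoint σ (α, β)) (deriv σ β) = 1 := by
  simpa only [chordMidpoint_comm σ β α] using h.swap.fderiv_deriv_left

/-- The mixed derivative `∂²/∂α∂β` of the identity `ψ ((σ α + σ β) / 2) = (α + β) / 2`. -/
lemma fderiv_fderiv_deriv_deriv [CompleteSpace E] (h : ChordStreamAt σ ψ (α, β)) :
    fderiv ℝ (fderiv ℝ ψ) (chordMidpoint σ (α, β)) (deriv σ α) (deriv σ β) = 0 := by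
  have h_deriv := hasDerivAt_fderiv_comp_apply (c := fun x => chordMidpoint σ (x, β))
    h.analyticAt_chordMidpoint
    (hasDerivAt_chordMidpoint_fst h.analyticAt_fst.differentiableAt.hasDerivAt β)
    (hasDerivAt_const α (deriv σ β))
  have h_const : (fun x => fderiv ℝ ψ (chordMidpoint σ (x, β)) (deriv σ β)) =ᶠ[𝓝 α] fun _ => 1 :=
    h.eventually_left.mono fun x hx => hx.fderiv_deriv_right
  simpa using h_deriv.unique ((hasDerivAt_const α 1).congr_of_eventuallyEq h_const)

lemma fderiv_deriv_self (h : ChordStreamAt σ ψ (t, t)) : fderiv ℝ ψ (σ t) (deriv σ t) = 1 := by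
  simpa only [chordMidpoint_self] using h.fderiv_deriv_left

lemma fderiv_deriv_deriv_self [CompleteSpace E] (h : ChordStreamAt σ ψ (t, t)) :
    fderiv ℝ ψ (σ t) (deriv (deriv σ) t) = 0 := by
  have h_deriv := hasDerivAt_fderiv_comp_apply h.analyticAt_self
    h.analyticAt_fst.differentiableAt.hasDerivAt h.analyticAt_fst.deriv.differentiableAt.hasDerivAt
  have h_const : (fun x => fderiv ℝ ψ (σ x) (deriv σ x)) =ᶠ[𝓝 t] fun _ => 1 :=
    h.eventually_diag.mono fun x hx => hx.fderiv_deriv_self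
  have h_wave := h.fderiv_fderiv_deriv_deriv
  rw [chordMidpoint_self] at h_wave
  simpa [h_wave] using h_deriv.unique ((hasDerivAt_const t 1).congr_of_eventuallyEq h_const)

end ChordStreamAt

lemma IsFoldChart.chordStreamAt {t₀ : ℝ} {e : OpenPartialHomeomorph (ℝ × ℝ) E}
    (he : IsFoldChart σ t₀ e) (hσ : AnalyticAt ℝ σ t₀) :
    ChordStreamAt σ (fun q => (e.symm q).1) (t₀, t₀) where
  analyticAt_fst := hσ
  analyticAt_snd := hσ
  analyticAt_chordMidpoint := by simpa only [chordMidpoint_self] using he.analyticAt_symm_fst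
  eventually_apply_eq := he.eventually_symm_chordMidpoint_fst

end ChordStream

/-- The Euclidean inner product of the plane, as a bilinear map; `ℝ × ℝ` itself carries the
supremum norm and has no inner product. -/
noncomputable def dotCLM : (ℝ × ℝ) →L[ℝ] StrongDual ℝ (ℝ × ℝ) :=
  (ContinuousLinearMap.fst ℝ ℝ ℝ).smulRight (ContinuousLinearMap.fst ℝ ℝ ℝ) +
    (ContinuousLinearMap.snd ℝ ℝ ℝ).smulRight (ContinuousLinearMap.snd ℝ ℝ ℝ)

lemma dotCLM_apply (x y : ℝ × ℝ) : dotCLM x y = x.1 * y.1 + x.2 * y.2 := by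
  simp [dotCLM]

lemma dotCLM_comm (x y : ℝ × ℝ) : dotCLM x y = dotCLM y x := by
  simp only [dotCLM_apply, mul_comm]

lemma dotCLM_self_pos {x : ℝ × ℝ} (hx : x ≠ 0) : 0 < dotCLM x x := by
  rw [dotCLM_apply]
  refine (add_nonneg (mul_self_nonneg _) (mul_self_nonneg _)).lt_of_ne' fun h => hx ?_
  exact Prod.ext_iff.2 (mul_self_add_mul_self_eq_zero.1 h)

lemma linearIndependent_pair_of_dotCLM_eq_zero {x y : ℝ × ℝ} (hx : x ≠ 0) (hy : y ≠ 0)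
    (hxy : dotCLM x y = 0) : LinearIndependent ℝ ![x, y] := by
  refine LinearIndependent.pair_iff.2 fun a b h => ⟨?_, ?_⟩
  · have h_dot : a * dotCLM x x + b * dotCLM x y = 0 := by
      simpa using congrArg (dotCLM x) h
    simpa [hxy, (dotCLM_self_pos hx).ne'] using h_dot
  · have h_dot : a * dotCLM y x + b * dotCLM y y = 0 := by
      simpa using congrArg (dotCLM y) h
    simpa [dotCLM_comm y x, hxy, (dotCLM_self_pos hy).ne'] using h_dot

lemma clm_eq_of_linearIndependent_pair {F : Type*} [NormedAddCommGroup F] [NormedSpace ℝ F]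
    {L M : ℝ × ℝ →L[ℝ] F} {x y : ℝ × ℝ} (hxy : LinearIndependent ℝ ![x, y]) (hx : L x = M x)
    (hy : L y = M y) : L = M := by
  have h_span := hxy.span_eq_top_of_card_eq_finrank (by simp)
  refine ContinuousLinearMap.coe_inj.1 (LinearMap.ext_on_range h_span fun i => ?_)
  fin_cases i
  exacts [hx, hy]

/-- The curve `σ` is analytic, parametrized by arc length and locally convex near `t`. -/
structure IsConvexUnitSpeedAt (σ : ℝ → ℝ × ℝ) (t : ℝ) : Prop where
  analyticAt : AnalyticAt ℝ σ t
  eventually_unit : ∀ᶠ s in 𝓝 t, dotCLM (deriv σ s) (deriv σ s) = 1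
  deriv_deriv_ne_zero : deriv (deriv σ) t ≠ 0

namespace IsConvexUnitSpeedAt

variable {σ : ℝ → ℝ × ℝ} {ψ : ℝ × ℝ → ℝ} {t : ℝ}

lemma eventually (h : IsConvexUnitSpeedAt σ t) : ∀ᶠ s in 𝓝 t, IsConvexUnitSpeedAt σ s := by
  filter_upwards [h.analyticAt.eventually_analyticAt, h.eventually_unit.eventually_nhds,
    h.analyticAt.deriv.deriv.continuousAt.eventually_ne h.deriv_deriv_ne_zero]
    with s h_analytic h_unit h_convex
  exact ⟨h_analytic, h_unit, h_convex⟩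

lemma deriv_ne_zero (h : IsConvexUnitSpeedAt σ t) : deriv σ t ≠ 0 := fun h_zero => by
  simpa [h_zero] using h.eventually_unit.self_of_nhds

lemma dotCLM_deriv_deriv_deriv (h : IsConvexUnitSpeedAt σ t) :
    dotCLM (deriv σ t) (deriv (deriv σ) t) = 0 := by
  have h_accel := h.analyticAt.deriv.differentiableAt.hasDerivAt
  have h_sq := (dotCLM.hasFDerivAt.comp_hasDerivAt t h_accel).clm_apply h_accel
  have h_eq := h_sq.unique ((hasDerivAt_const t 1).congr_of_eventuallyEq h.eventually_unit)
  rw [dotCLM_comm] at h_eq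
  exact add_self_eq_zero.1 h_eq

lemma linearIndependent (h : IsConvexUnitSpeedAt σ t) :
    LinearIndependent ℝ ![deriv σ t, deriv (deriv σ) t] :=
  linearIndependent_pair_of_dotCLM_eq_zero h.deriv_ne_zero h.deriv_deriv_ne_zero
    h.dotCLM_deriv_deriv_deriv

lemma fderiv_eq_dotCLM_deriv (h : IsConvexUnitSpeedAt σ t) (hψ : ChordStreamAt σ ψ (t, t)) :
    fderiv ℝ ψ (σ t) = dotCLM (deriv σ t) :=
  clm_eq_of_linearIndependent_pair h.linearIndependent
    (hψ.fderiv_deriv_self.trans h.eventually_unit.self_of_nhds.symm)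
    (hψ.fderiv_deriv_deriv_self.trans h.dotCLM_deriv_deriv_deriv.symm)

lemma fderiv_fderiv_deriv_eq_dotCLM (h : IsConvexUnitSpeedAt σ t)
    (hψ : ChordStreamAt σ ψ (t, t)) :
    fderiv ℝ (fderiv ℝ ψ) (σ t) (deriv σ t) = dotCLM (deriv (deriv σ) t) := by
  have h_chain := hψ.analyticAt_self.fderiv.differentiableAt.hasFDerivAt.comp_hasDerivAt t
    h.analyticAt.differentiableAt.hasDerivAt
  have h_grad : (fun s => fderiv ℝ ψ (σ s)) =ᶠ[𝓝 t] fun s => dotCLM (deriv σ s) := by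
    filter_upwards [h.eventually, hψ.eventually_diag] with s hs hψs
    exact hs.fderiv_eq_dotCLM_deriv hψs
  exact h_chain.unique ((dotCLM.hasFDerivAt.comp_hasDerivAt t
    h.analyticAt.deriv.differentiableAt.hasDerivAt).congr_of_eventuallyEq h_grad)

end IsConvexUnitSpeedAt

lemma clm_prod_apply {E : Type*} [NormedAddCommGroup E] [NormedSpace ℝ E] (L : ℝ × ℝ →L[ℝ] E)
    (x : ℝ × ℝ) : L x = x.1 • L (1, 0) + x.2 • L (0, 1) := by
  rw [← map_smul, ← map_smul, ← map_add]
  simp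

section Bfun

variable {ψ : ℝ × ℝ → ℝ} {q : ℝ × ℝ}

lemma pd_ne_zero_of_hasFDerivAt {f' : StrongDual ℝ (ℝ × ℝ)} (hψ : HasFDerivAt ψ f' q)
    {v : ℝ × ℝ} (hv : f' v ≠ 0) : (pd1 ψ q, pd2 ψ q) ≠ (0, 0) := fun h_zero => by
  rw [Prod.mk.injEq, pd1, pd2, hψ.fderiv] at h_zero
  exact hv (by rw [clm_prod_apply, h_zero.1, h_zero.2, smul_zero, smul_zero, add_zero])

lemma pd_eq_of_fderiv_eq_dotCLM {v : ℝ × ℝ} (h : fderiv ℝ ψ q = dotCLM v) :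
    (pd1 ψ q, pd2 ψ q) = v := by
  simp [pd1, pd2, h, dotCLM_apply]

lemma Bfun_eq_one_sub_dotCLM (ψ : ℝ × ℝ → ℝ) (q : ℝ × ℝ) :
    Bfun ψ q = 1 - dotCLM (pd1 ψ q, pd2 ψ q) (pd1 ψ q, pd2 ψ q) := by
  rw [Bfun, dotCLM_apply]
  ring

lemma hasFDerivAt_Bfun_of_analyticAt (hψ : AnalyticAt ℝ ψ q) :
    HasFDerivAt (Bfun ψ) ((-2 : ℝ) • fderiv ℝ (fderiv ℝ ψ) q (pd1 ψ q, pd2 ψ q)) q := by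
  have h₁ := (hasFDerivAt_fderiv_apply hψ (1, 0)).pow 2
  have h₂ := (hasFDerivAt_fderiv_apply hψ (0, 1)).pow 2
  refine (((hasFDerivAt_const 1 q).sub h₁).sub h₂).congr_fderiv ?_
  rw [clm_prod_apply _ (pd1 ψ q, pd2 ψ q)]
  simp only [pd1, pd2, Nat.add_one_sub_one, pow_one, zero_sub]
  module

end Bfun

namespace IsConvexUnitSpeedAt

variable {σ : ℝ → ℝ × ℝ} {ψ : ℝ × ℝ → ℝ} {t : ℝ}

lemma Bfun_eq_zero (h : IsConvexUnitSpeedAt σ t) (hψ : ChordStreamAt σ ψ (t, t)) :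
    Bfun ψ (σ t) = 0 := by
  rw [Bfun_eq_one_sub_dotCLM, pd_eq_of_fderiv_eq_dotCLM (h.fderiv_eq_dotCLM_deriv hψ),
    h.eventually_unit.self_of_nhds, sub_self]

lemma hasFDerivAt_Bfun (h : IsConvexUnitSpeedAt σ t) (hψ : ChordStreamAt σ ψ (t, t)) :
    HasFDerivAt (Bfun ψ) ((-2 : ℝ) • dotCLM (deriv (deriv σ) t)) (σ t) := by
  have hB := hasFDerivAt_Bfun_of_analyticAt hψ.analyticAt_self
  rwa [pd_eq_of_fderiv_eq_dotCLM (h.fderiv_eq_dotCLM_deriv hψ),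
    h.fderiv_fderiv_deriv_eq_dotCLM hψ] at hB

end IsConvexUnitSpeedAt

/-- The coefficients `(1 - q², 2 p q, 1 - p²)` of the equation are proportional to the symmetrized
product `(a₁ b₁, a₁ b₂ + a₂ b₁, a₂ b₂)` of the two unit vectors on the line `p x + q y = 1`. -/
lemma zmc_of_conjugate_unit_vectors {p q r s t a₁ a₂ b₁ b₂ : ℝ} (ha : a₁ ^ 2 + a₂ ^ 2 = 1)
    (hb : b₁ ^ 2 + b₂ ^ 2 = 1) (hab : ¬(a₁ = b₁ ∧ a₂ = b₂)) (hpa : a₁ * p + a₂ * q = 1)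
    (hpb : b₁ * p + b₂ * q = 1)
    (h_conj : a₁ * b₁ * r + (a₁ * b₂ + a₂ * b₁) * s + a₂ * b₂ * t = 0) :
    (1 - q ^ 2) * r + 2 * p * q * s + (1 - p ^ 2) * t = 0 := by
  set D := a₁ * b₂ - a₂ * b₁ with hD
  set c := 2 - 2 * (a₁ * b₁ + a₂ * b₂) with hc
  have hDp : D * p = b₂ - a₂ := by rw [hD]; linear_combination b₂ * hpa - a₂ * hpb
  have hDq : D * q = a₁ - b₁ := by rw [hD]; linear_combination a₁ * hpb - b₁ * hpa
  have hD_ne : D ≠ 0 := fun h_zero => hab <| by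
    rw [h_zero, zero_mul] at hDp hDq
    exact ⟨(sub_eq_zero.1 hDq.symm), (sub_eq_zero.1 hDp.symm).symm⟩
  have h_xx : D ^ 2 * (1 - q ^ 2) = c * (a₁ * b₁) := by
    rw [mul_sub, mul_one, ← mul_pow, hDq, hD, hc]
    linear_combination (b₁ ^ 2 + b₂ ^ 2 - (1 - b₁ ^ 2)) * ha + (1 - a₂ ^ 2) * hb
  have h_xy : D ^ 2 * (2 * p * q) = c * (a₁ * b₂ + a₂ * b₁) := by
    rw [show D ^ 2 * (2 * p * q) = 2 * (D * p) * (D * q) by ring, hDp, hDq, hc]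
    linear_combination 2 * b₁ * b₂ * ha + 2 * a₁ * a₂ * hb
  have h_yy : D ^ 2 * (1 - p ^ 2) = c * (a₂ * b₂) := by
    rw [mul_sub, mul_one, ← mul_pow, hDp, hD, hc]
    linear_combination (b₁ ^ 2 + b₂ ^ 2 - (1 - b₂ ^ 2)) * ha + (1 - a₁ ^ 2) * hb
  apply mul_left_cancel₀ (pow_ne_zero 2 hD_ne)
  linear_combination r * h_xx + s * h_xy + t * h_yy + c * h_conj

/-- The left-hand side of the zero mean curvature equation `ZMCAt`, as a function of the point. -/
noncomputable def zmcOperator (ψ : ℝ × ℝ → ℝ) (q : ℝ × ℝ) : ℝ :=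
  (1 - pd2 ψ q ^ 2) * pd1 (pd1 ψ) q + 2 * pd1 ψ q * pd2 ψ q * pd2 (pd1 ψ) q
    + (1 - pd1 ψ q ^ 2) * pd2 (pd2 ψ) q

lemma analyticAt_zmcOperator {ψ : ℝ × ℝ → ℝ} {q : ℝ × ℝ} (hψ : AnalyticAt ℝ ψ q) :
    AnalyticAt ℝ (zmcOperator ψ) q := by
  have h₁ : AnalyticAt ℝ (pd1 ψ) q := analyticAt_fderiv_apply hψ _
  have h₂ : AnalyticAt ℝ (pd2 ψ) q := analyticAt_fderiv_apply hψ _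
  have h₁₁ : AnalyticAt ℝ (pd1 (pd1 ψ)) q := analyticAt_fderiv_apply h₁ _
  have h₁₂ : AnalyticAt ℝ (pd2 (pd1 ψ)) q := analyticAt_fderiv_apply h₁ _
  have h₂₂ : AnalyticAt ℝ (pd2 (pd2 ψ)) q := analyticAt_fderiv_apply h₂ _
  unfold zmcOperator
  fun_prop

lemma zmcAt_of_conjugate_unit_vectors {ψ : ℝ × ℝ → ℝ} {q a b : ℝ × ℝ} (hψ : AnalyticAt ℝ ψ q)
    (ha : dotCLM a a = 1) (hb : dotCLM b b = 1) (hab : a ≠ b) (hψa : fderiv ℝ ψ q a = 1)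
    (hψb : fderiv ℝ ψ q b = 1) (h_conj : fderiv ℝ (fderiv ℝ ψ) q a b = 0) : ZMCAt ψ q := by
  have h_pd (v w : ℝ × ℝ) :
      fderiv ℝ (fun x => fderiv ℝ ψ x v) q w = fderiv ℝ (fderiv ℝ ψ) q v w :=
    congrArg (· w) (hasFDerivAt_fderiv_apply hψ v).fderiv
  have h_symm := fderiv_fderiv_comm hψ (1, 0) (0, 1)
  rw [dotCLM_apply, ← sq, ← sq] at ha hb
  rw [clm_prod_apply, smul_eq_mul, smul_eq_mul] at hψa hψb
  rw [clm_prod_apply, clm_prod_apply (fderiv ℝ (fderiv ℝ ψ) q)] at h_conj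
  simp only [add_apply, smul_apply, smul_eq_mul, ← h_symm] at h_conj
  unfold ZMCAt pd1 pd2
  rw [h_pd, h_pd, h_pd]
  refine zmc_of_conjugate_unit_vectors ha hb (fun h => hab (Prod.ext h.1 h.2)) hψa hψb ?_
  linear_combination h_conj

lemma ChordStreamAt.zmcAt {σ : ℝ → ℝ × ℝ} {ψ : ℝ × ℝ → ℝ} {α β : ℝ}
    (h : ChordStreamAt σ ψ (α, β)) (hα : dotCLM (deriv σ α) (deriv σ α) = 1)
    (hβ : dotCLM (deriv σ β) (deriv σ β) = 1) (h_ne : deriv σ α ≠ deriv σ β) :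
    ZMCAt ψ (chordMidpoint σ (α, β)) :=
  zmcAt_of_conjugate_unit_vectors h.analyticAt_chordMidpoint hα hβ h_ne h.fderiv_deriv_left
    h.fderiv_deriv_right h.fderiv_fderiv_deriv_deriv

lemma eventually_ne_of_hasStrictDerivAt {𝕜 F : Type*} [NontriviallyNormedField 𝕜]
    [NormedAddCommGroup F] [NormedSpace 𝕜 F] {f : 𝕜 → F} {f' : F} {t : 𝕜}
    (hf : HasStrictDerivAt f f' t) (hf' : f' ≠ 0) :
    ∀ᶠ p : 𝕜 × 𝕜 in 𝓝 (t, t), p.1 ≠ p.2 → f p.1 ≠ f p.2 := by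
  filter_upwards [(HasDerivAtFilter.isTheta_sub hf hf').isBigO_symm.eq_zero_imp] with p hp h_ne h_eq
  exact h_ne (sub_eq_zero.1 (hp (sub_eq_zero.2 h_eq)))

namespace IsConvexUnitSpeedAt

variable {σ : ℝ → ℝ × ℝ} {t : ℝ}

lemma eventually_zmcAt_chordMidpoint {ψ : ℝ × ℝ → ℝ} (h : IsConvexUnitSpeedAt σ t)
    (hψ : ChordStreamAt σ ψ (t, t)) :
    ∀ᶠ p : ℝ × ℝ in 𝓝 (t, t), p.1 ≠ p.2 → ZMCAt ψ (chordMidpoint σ p) := by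
  filter_upwards [hψ.eventually, continuousAt_fst.eventually h.eventually_unit,
    continuousAt_snd.eventually h.eventually_unit, eventually_ne_of_hasStrictDerivAt
      h.analyticAt.deriv.hasStrictDerivAt h.deriv_deriv_ne_zero] with p hp h_fst h_snd h_inj h_ne
  exact hp.zmcAt h_fst h_snd (h_inj h_ne)

lemma exists_chordStreamAt_zmcAt (h : IsConvexUnitSpeedAt σ t) :
    ∃ ψ, ChordStreamAt σ ψ (t, t) ∧ ∀ᶠ q in 𝓝 (σ t), ZMCAt ψ q := by
  obtain ⟨e, he⟩ := exists_isFoldChart h.analyticAt h.linearIndependent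
  have hψ := he.chordStreamAt h.analyticAt
  exact ⟨_, hψ, he.eventually_eq_zero (analyticAt_zmcOperator hψ.analyticAt_self)
    (h.eventually_zmcAt_chordMidpoint hψ)⟩

end IsConvexUnitSpeedAt

lemma exists_forall_neg_pos_of_hasFDerivAt {E : Type*} [NormedAddCommGroup E] [NormedSpace ℝ E]
    {f : E → ℝ} {f' : StrongDual ℝ E} {x v : E} {V : Set E} (hf : HasFDerivAt f f' x)
    (hx : f x = 0) (hv : f' v < 0) (hV : V ∈ 𝓝 x) :
    ∃ s₀ > 0, ∀ s : ℝ, 0 < s → s < s₀ →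
      x + s • v ∈ V ∧ f (x + s • v) < 0 ∧ x - s • v ∈ V ∧ 0 < f (x - s • v) := by
  have h_line : HasDerivAt (fun s : ℝ => f (x + s • v)) (f' v) 0 :=
    hf.hasLineDerivAt v
  have h_mem : ∀ᶠ s in 𝓝 (0 : ℝ), x + s • v ∈ V :=
    (Continuous.tendsto' (by fun_prop) _ _ (by simp)).eventually hV
  have h_sign := eventually_nhdsWithin_sign_eq_of_deriv_neg (h_line.deriv.trans_lt hv)
    (by simpa using hx)
  obtain ⟨s₀, hs₀, h⟩ := Metric.eventually_nhds_iff.1 (h_mem.and h_sign)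
  refine ⟨s₀, hs₀, fun s hs hs_lt => ?_⟩
  have h_add := h (y := s) (by rwa [Real.dist_0_eq_abs, abs_of_pos hs])
  have h_sub := h (y := -s) (by rwa [Real.dist_0_eq_abs, abs_neg, abs_of_pos hs])
  rw [zero_sub, sign_neg (neg_lt_zero.2 hs)] at h_add
  rw [sub_neg_eq_add, zero_add, sign_pos hs, neg_smul, ← sub_eq_add_neg] at h_sub
  exact ⟨h_add.1, sign_eq_neg_one_iff.1 h_add.2, h_sub.1, sign_eq_one_iff.1 h_sub.2⟩

/-- for a locally convex real analytic arc-length parametrized plane curve σ,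
    near each σ(t₀) there is a real analytic solution ψ of the ZMC equation (a stream
    function of the virtual gas with ρc = 1) such that ψ(σ(t)) = t, B vanishes along σ with
    ∇B ≠ 0, and B < 0 (supersonic) on the side of σ''(t) while B > 0 (subsonic) on the
    opposite side. -/
theorem stmt19 (a b : ℝ) (σ : ℝ → ℝ × ℝ)
    (hanal : AnalyticOnNhd ℝ σ (Ioo a b))
    (hunit : ∀ t ∈ Ioo a b, (deriv σ t).1 ^ 2 + (deriv σ t).2 ^ 2 = 1)
    (hconv : ∀ t ∈ Ioo a b, deriv (deriv σ) t ≠ 0) :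
    ∀ t₀ ∈ Ioo a b, ∃ V : Set (ℝ × ℝ), ∃ δ > 0, ∃ ψ : ℝ × ℝ → ℝ,
      IsOpen V ∧ σ t₀ ∈ V ∧ AnalyticOnNhd ℝ ψ V ∧
      (∀ q ∈ V, ZMCAt ψ q) ∧
      ∀ t : ℝ, |t - t₀| < δ →
        t ∈ Ioo a b ∧ σ t ∈ V ∧ ψ (σ t) = t ∧ Bfun ψ (σ t) = 0 ∧
        (pd1 (Bfun ψ) (σ t), pd2 (Bfun ψ) (σ t)) ≠ (0, 0) ∧
        ∃ s₀ > 0, ∀ s : ℝ, 0 < s → s < s₀ →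
          σ t + s • deriv (deriv σ) t ∈ V ∧
          Bfun ψ (σ t + s • deriv (deriv σ) t) < 0 ∧
          σ t - s • deriv (deriv σ) t ∈ V ∧
          0 < Bfun ψ (σ t - s • deriv (deriv σ) t) := by
  intro t₀ ht₀
  have h_curve (t : ℝ) (ht : t ∈ Ioo a b) : IsConvexUnitSpeedAt σ t := by
    refine ⟨hanal t ht, ?_, hconv t ht⟩
    filter_upwards [isOpen_Ioo.mem_nhds ht] with s hs
    rw [dotCLM_apply, ← sq, ← sq, hunit s hs]
  obtain ⟨ψ, hψ, h_zmc⟩ := (h_curve t₀ ht₀).exists_chordStreamAt_zmcAt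
  obtain ⟨V, hV, hV_open, hV_mem⟩ := eventually_nhds_iff.1
    (hψ.analyticAt_self.eventually_analyticAt.and h_zmc)
  have hσV : ∀ᶠ t in 𝓝 t₀, σ t ∈ V :=
    (hanal t₀ ht₀).continuousAt.eventually (hV_open.mem_nhds hV_mem)
  obtain ⟨δ, hδ, h_near⟩ := Metric.eventually_nhds_iff.1
    ((isOpen_Ioo.eventually_mem ht₀).and (hσV.and hψ.eventually_diag))
  refine ⟨V, δ, hδ, ψ, hV_open, hV_mem, fun q hq => (hV q hq).1, fun q hq => (hV q hq).2,
    fun t ht => ?_⟩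
  obtain ⟨ht_mem, htV, hψt⟩ := h_near (by rwa [Real.dist_eq])
  have hB := (h_curve t ht_mem).Bfun_eq_zero hψt
  have hB' := (h_curve t ht_mem).hasFDerivAt_Bfun hψt
  have h_neg : ((-2 : ℝ) • dotCLM (deriv (deriv σ) t)) (deriv (deriv σ) t) < 0 :=
    mul_neg_of_neg_of_pos (by norm_num) (dotCLM_self_pos (hconv t ht_mem))
  exact ⟨ht_mem, htV, hψt.apply_self, hB, pd_ne_zero_of_hasFDerivAt hB' h_neg.ne,
    exists_forall_neg_pos_of_hasFDerivAt hB' hB h_neg (hV_open.mem_nhds htV)⟩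
end
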